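/- There exist universal constants c > 0, C > 0 and m₀ such that for all integers m ≥ m₀, n with n² ≥ m, r ≥ 1, and k with √m·r ≤ k ≤ m: if a randomized t-round adaptive algorithm making k exact linear measurements per round is such that for every n×n real matrix A with at most m nonzero entries it outputs a matrix B of rank at most r satisfying ‖A − B‖ ≤ 2·σ_{r+1}(A) with probability at least 1 − m^{−C} (over the seed), then t ≥ c·log(m/k). -/

import Mathlib

open MeasureTheory ProbabilityTheory Matrix
open scoped ENNReal Classical

noncomputable section

/-- Squared Euclidean norm of a finitely-indexed real vector. -/
def sqNorm {ι : Type*} [Fintype ι] (x : ι → ℝ) : ℝ := ∑ i, x i ^ 2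

/-- Squared Frobenius norm of a real matrix. -/
def frobSq {m n : Type*} [Fintype m] [Fintype n] (A : Matrix m n ℝ) : ℝ :=
  ∑ i, ∑ j, A i j ^ 2

/-- Spectral (ℓ₂ operator) norm of a real matrix. -/
def specNorm {m n : Type*} [Fintype m] [Fintype n] (A : Matrix m n ℝ) : ℝ :=
  sSup ((fun x : n → ℝ => Real.sqrt (sqNorm (A.mulVec x))) '' {x | sqNorm x ≤ 1})

/-- `i`-th largest singular value (1-based), characterized via
`σ_i(A) = min {‖A − X‖ : rank X ≤ i − 1}`. -/
def singVal {m n : Type*} [Fintype m] [Fintype n] (A : Matrix m n ℝ) (i : ℕ) : ℝ :=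
  sInf {c | ∃ X : Matrix m n ℝ, X.rank ≤ i - 1 ∧ c = specNorm (A - X)}

/-- Flattening of an `n × n` matrix into a vector in `ℝ^{n²}`. -/
def vec (n : ℕ) (A : Matrix (Fin n) (Fin n) ℝ) : Fin (n * n) → ℝ :=
  fun i => A (finProdFinEquiv.symm i).1 (finProdFinEquiv.symm i).2

/-- `u ⊗ v = vec (u vᵀ) ∈ ℝ^{n²}`. -/
def tensor {n : ℕ} (u v : Fin n → ℝ) : Fin (n * n) → ℝ :=
  vec n (Matrix.of fun i j => u i * v j)

/-- Standard Gaussian measure on `ι → ℝ`. -/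
def stdGaussian (ι : Type*) [Fintype ι] : Measure (ι → ℝ) :=
  Measure.pi fun _ => gaussianReal 0 1

/-- Standard Gaussian measure on `n × n` matrices (as `Fin n → Fin n → ℝ`). -/
def stdGaussianMat (n : ℕ) : Measure (Fin n → Fin n → ℝ) :=
  Measure.pi fun _ => stdGaussian (Fin n)

/-- Query maps of a deterministic `t`-round adaptive algorithm making `k` linear
measurements per round on inputs in `ℝ^N`. -/
def QueryMaps (N k t : ℕ) : Type :=
  (j : Fin t) → (Fin (j : ℕ) → (Fin k → ℝ)) → Matrix (Fin k) (Fin N) ℝ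

namespace QueryMaps

variable {N k t : ℕ}

/-- Restriction of a round-`j` history to the first `i` rounds. -/
def prefixHist {j : Fin t} (h : Fin (j : ℕ) → Fin k → ℝ) {i : Fin t}
    (hij : (i : ℕ) < (j : ℕ)) : Fin (i : ℕ) → Fin k → ℝ :=
  fun l => h ⟨l.1, l.isLt.trans hij⟩

/-- Validity of query maps: measurability, orthonormal rows within each round, and
orthogonality across rounds along consistent histories. -/
def Valid (Q : QueryMaps N k t) : Prop :=
  (∀ (j : Fin t) (i : Fin k) (l : Fin N), Measurable fun h => Q j h i l) ∧
  (∀ (j : Fin t) (h : Fin (j : ℕ) → Fin k → ℝ), Q j h * (Q j h)ᵀ = 1) ∧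
  (∀ (j i : Fin t) (hij : (i : ℕ) < (j : ℕ)) (h : Fin (j : ℕ) → Fin k → ℝ),
      Q j h * (Q i (prefixHist h hij))ᵀ = 0)

/-- Responses of the algorithm under exact linear measurements of `a`. -/
def resp (Q : QueryMaps N k t) (a : Fin N → ℝ) (j : Fin t) : Fin k → ℝ :=
  (Q j fun i => resp Q a ⟨i.1, i.isLt.trans j.isLt⟩).mulVec a
termination_by (j : ℕ)
decreasing_by exact i.isLt

/-- Responses of the algorithm under noisy linear measurements of `a`, with fresh
per-round noise `g`. -/
def nresp (Q : QueryMaps N k t) (a : Fin N → ℝ) (g : Fin t → Fin k → ℝ) (j : Fin t) :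
    Fin k → ℝ :=
  ((Q j fun i => nresp Q a g ⟨i.1, i.isLt.trans j.isLt⟩).mulVec a) + g j
termination_by (j : ℕ)
decreasing_by exact i.isLt

/-- The `tk × N` matrix stacking all the query matrices realized along the run of the
algorithm on input `a` (exact measurements). -/
def runMat (Q : QueryMaps N k t) (a : Fin N → ℝ) : Matrix (Fin t × Fin k) (Fin N) ℝ :=
  Matrix.of fun p l =>
    Q p.1 (fun i => resp Q a ⟨i.1, i.isLt.trans p.1.isLt⟩) p.2 l

end QueryMaps

/-- Kullback–Leibler divergence, valued in `[0, ∞]`, defined with the natural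
logarithm. -/
def klDiv {Ω : Type*} [MeasurableSpace Ω] (P Q : Measure Ω) : ℝ≥0∞ :=
  if P ≪ Q ∧ Integrable (fun x => Real.log ((P.rnDeriv Q x).toReal)) P then
    ENNReal.ofReal (∫ x, Real.log ((P.rnDeriv Q x).toReal) ∂P)
  else ⊤

/-- The rank-`r` plant `Σ_{i=1}^r uᵢ vᵢᵀ` built from the rows of `U` and `V`. -/
def plant {n r : ℕ} (U V : Fin r → Fin n → ℝ) : Matrix (Fin n) (Fin n) ℝ :=
  Matrix.of fun i j => ∑ l, U l i * V l j

/-- Schatten-`p` norm (real `p`), via the singular values. -/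
def schattenNorm {n : ℕ} (p : ℝ) (A : Matrix (Fin n) (Fin n) ℝ) : ℝ :=
  (∑ i ∈ Finset.range n, singVal A (i + 1) ^ p) ^ (1 / p)

/-- Ky-Fan `p` norm: sum of the `p` largest singular values. -/
def kyFanNorm {n : ℕ} (p : ℕ) (A : Matrix (Fin n) (Fin n) ℝ) : ℝ :=
  ∑ i ∈ Finset.range p, singVal A (i + 1)

/-!
The hard inputs are Gaussian matrices with a planted rank-one spike. Put `s = ⌊√m⌋`. The input is
an `s × s` block `b + w`, padded with zeros, where `b` has independent standard Gaussian entries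
and `w = (64 / √s) u vᵀ` for uniformly random sign vectors `u` and `v`. Thus `‖w‖_F² = 4096 s`,
whereas `‖b‖ ≤ 16 √s` with probability at least `3 / 4`.

*Success reveals the spike.* Since `σ_{r+1}(b + w) ≤ ‖b‖`, the block `B'` of an admissible output
satisfies `‖w - B'‖ ≤ 48 √s`. Hence the matrices with columns in the column space of `B'`, which
form a space of dimension at most `s r ≤ k`, capture at least `(4096 - 48²) s = 1792 s` of `‖w‖_F²`.
This space counts as the queries of one more round. Restricted to the block, the queries of the
first `j` rounds span subspaces `V_j(b)` of dimension at most `j k`, for `j ≤ t + 1`, and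
`V_{j+1}(b)` depends only on the component of `b` in `V_j(b)`.

*One round multiplies the information by at most a constant.* Given its component in `V_j(b)`, the
rest of a Gaussian vector `b` is a fresh Gaussian, even though `V_j` is adaptive. So the likelihood
ratio of the planted and the unplanted model, seen through `V_j`, is `exp (⟪Π w, b⟫ - ‖Π w‖² / 2)`
with `Π` the projection onto `V_j(b)`. As long as `‖Π w‖² ≤ τ`, it exceeds `exp (2 τ)` with planted
probability at most `exp (-τ)`, and below that level probabilities can be computed in the unplanted
model. There `V_{j+1}` is independent of `w`, and a fixed space of dimension `d` captures more than
`τ'` of at most a fraction `exp (d / (2 s) - τ' / 32768)` of the spikes, by an exponential moment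
bound for quadratic forms in signs. With `τ_j = 8 (k / s) 2 ^ (17 j)` the failure probabilities add
up to at most `1 / 8`.

A success probability above `1 / 2 > 1 / 8 + 1 / 4` therefore forces
`1792 s ≤ 8 (k / s) 2 ^ (17 (t + 1))`, so `log (m / k) ≤ 17 (t + 1)`. Finally `t ≥ 1`, because
without measurements the output does not depend on the input.
-/

-- Plain `stdGaussian` is the measure on `ι → ℝ` defined above.
local notation "γ[" E "]" => ProbabilityTheory.stdGaussian E

/-! ### Standard Gaussian measures -/

section Gaussian

variable {E F ι κ : Type*} [NormedAddCommGroup E] [InnerProductSpace ℝ E]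
  [NormedAddCommGroup F] [InnerProductSpace ℝ F]

lemma measure_ext_of_laplace [MeasurableSpace E] [BorelSpace E] [SecondCountableTopology E]
    [CompleteSpace E] {μ ν : Measure E} [IsProbabilityMeasure μ] [IsFiniteMeasure ν]
    (hμ : ∀ ξ : E, ∫⁻ x, ENNReal.ofReal (Real.exp (inner ℝ ξ x)) ∂μ ≠ ∞)
    (h : ∀ ξ : E, ∫⁻ x, ENNReal.ofReal (Real.exp (inner ℝ ξ x)) ∂μ
      = ∫⁻ x, ENNReal.ofReal (Real.exp (inner ℝ ξ x)) ∂ν) : μ = ν := by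
  refine Measure.ext_of_charFun (funext fun ξ => ?_)
  have hmgf : mgf (fun x => inner ℝ ξ x) μ = mgf (fun x => inner ℝ ξ x) ν := by
    ext t
    have hpos : ∀ ρ : Measure E, 0 ≤ᵐ[ρ] fun x => Real.exp (t * inner ℝ ξ x) :=
      fun ρ => ae_of_all _ fun x => (Real.exp_pos _).le
    have ht := h (t • ξ)
    simp only [real_inner_smul_left] at ht
    rw [mgf, mgf, integral_eq_lintegral_of_nonneg_ae (hpos μ) (by fun_prop),
      integral_eq_lintegral_of_nonneg_ae (hpos ν) (by fun_prop), ht]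
  have huniv : integrableExpSet (fun x => inner ℝ ξ x) μ = Set.univ := by
    refine Set.eq_univ_of_forall fun t => ⟨by fun_prop, ?_⟩
    rw [hasFiniteIntegral_iff_ofReal (ae_of_all _ fun x => (Real.exp_pos _).le)]
    simpa only [real_inner_smul_left] using (hμ (t • ξ)).lt_top
  have hI := eqOn_complexMGF_of_mgf hmgf (x := Complex.I) (by simp [huniv])
  simp only [complexMGF] at hI
  simpa [charFun_apply, real_inner_comm ξ, mul_comm] using hI

lemma lintegral_exp_inner_stdGaussian [FiniteDimensional ℝ E] [MeasurableSpace E] [BorelSpace E]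
    (ξ : E) :
    ∫⁻ x, ENNReal.ofReal (Real.exp (inner ℝ ξ x)) ∂γ[E]
      = ENNReal.ofReal (Real.exp (‖ξ‖ ^ 2 / 2)) := by
  have hmap : γ[E].map (fun x => inner ℝ ξ x) = gaussianReal 0 (‖ξ‖ ^ 2).toNNReal := by
    have h := IsGaussian.map_eq_gaussianReal (μ := γ[E]) (innerSL ℝ ξ)
    rwa [variance_dual_stdGaussian, integral_strongDual_stdGaussian, innerSL_apply_norm] at h
  have hint : Integrable (fun x => Real.exp (inner ℝ ξ x)) γ[E] := by
    have := integrable_exp_mul_gaussianReal (μ := 0) (v := (‖ξ‖ ^ 2).toNNReal) 1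
    rw [← hmap, integrable_map_measure (by fun_prop) (by fun_prop)] at this
    simpa [Function.comp_def] using this
  rw [← ofReal_integral_eq_lintegral_ofReal hint (ae_of_all _ fun x => (Real.exp_pos _).le)]
  congr 1
  simpa [mgf] using mgf_gaussianReal hmap 1

lemma map_add_right_stdGaussian [FiniteDimensional ℝ E] [MeasurableSpace E] [BorelSpace E]
    (w : E) :
    γ[E].map (fun b => b + w)
      = γ[E].withDensity fun b => ENNReal.ofReal (Real.exp (inner ℝ w b - ‖w‖ ^ 2 / 2)) := by
  have hl : ∀ ξ : E, ∫⁻ x, ENNReal.ofReal (Real.exp (inner ℝ ξ x)) ∂(γ[E].map fun b => b + w)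
      = ENNReal.ofReal (Real.exp (inner ℝ ξ w + ‖ξ‖ ^ 2 / 2)) := by
    intro ξ
    rw [lintegral_map (by fun_prop) (by fun_prop)]
    simp only [inner_add_right, Real.exp_add, ENNReal.ofReal_mul (Real.exp_pos _).le]
    rw [lintegral_mul_const _ (by fun_prop), lintegral_exp_inner_stdGaussian, mul_comm]
  have hr : ∀ ξ : E, ∫⁻ x, ENNReal.ofReal (Real.exp (inner ℝ ξ x))
        ∂(γ[E].withDensity fun b => ENNReal.ofReal (Real.exp (inner ℝ w b - ‖w‖ ^ 2 / 2)))
      = ENNReal.ofReal (Real.exp (inner ℝ ξ w + ‖ξ‖ ^ 2 / 2)) := by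
    intro ξ
    rw [lintegral_withDensity_eq_lintegral_mul _ (by fun_prop) (by fun_prop)]
    have hsplit : ∀ b : E, ENNReal.ofReal (Real.exp (inner ℝ w b - ‖w‖ ^ 2 / 2))
          * ENNReal.ofReal (Real.exp (inner ℝ ξ b))
        = ENNReal.ofReal (Real.exp (-‖w‖ ^ 2 / 2))
          * ENNReal.ofReal (Real.exp (inner ℝ (w + ξ) b)) := by
      intro b
      rw [← ENNReal.ofReal_mul (Real.exp_pos _).le, ← ENNReal.ofReal_mul (Real.exp_pos _).le,
        ← Real.exp_add, ← Real.exp_add, inner_add_left]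
      ring_nf
    simp only [Pi.mul_apply, hsplit]
    rw [lintegral_const_mul _ (by fun_prop), lintegral_exp_inner_stdGaussian,
      ← ENNReal.ofReal_mul (Real.exp_pos _).le, ← Real.exp_add, norm_add_sq_real, real_inner_comm]
    ring_nf
  have : IsProbabilityMeasure (γ[E].map fun b => b + w) :=
    Measure.isProbabilityMeasure_map (by fun_prop)
  have : IsFiniteMeasure
      (γ[E].withDensity fun b => ENNReal.ofReal (Real.exp (inner ℝ w b - ‖w‖ ^ 2 / 2))) := by
    have h0 := hr 0
    simp only [inner_zero_left, Real.exp_zero, ENNReal.ofReal_one, lintegral_one] at h0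
    exact ⟨h0 ▸ ENNReal.ofReal_lt_top⟩
  refine measure_ext_of_laplace (fun ξ => ?_) fun ξ => ?_
  · exact hl ξ ▸ ENNReal.ofReal_ne_top
  · rw [hl, hr]

/-- The vector whose component in `W` is that of `b` and whose orthogonal component is that
of `z`. -/
def resample (W : Submodule ℝ E) [W.HasOrthogonalProjection] (b z : E) : E :=
  W.starProjection b + (z - W.starProjection z)

lemma norm_sq_eq_add_norm_sq_sub_starProjection (W : Submodule ℝ E) [W.HasOrthogonalProjection]
    (x : E) : ‖x‖ ^ 2 = ‖W.starProjection x‖ ^ 2 + ‖x - W.starProjection x‖ ^ 2 := by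
  rw [W.norm_sq_eq_add_norm_sq_starProjection x, Submodule.starProjection_orthogonal_val]

lemma starProjection_starProjection_of_le {V W : Submodule ℝ E} [V.HasOrthogonalProjection]
    [W.HasOrthogonalProjection] (h : V ≤ W) (x : E) :
    V.starProjection (W.starProjection x) = V.starProjection x :=
  DFunLike.congr_fun (Submodule.starProjection_comp_starProjection_of_le h) x

lemma norm_starProjection_le_of_le {V W : Submodule ℝ E} [V.HasOrthogonalProjection]
    [W.HasOrthogonalProjection] (h : V ≤ W) (x : E) :
    ‖V.starProjection x‖ ≤ ‖W.starProjection x‖ := by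
  rw [← starProjection_starProjection_of_le h]
  exact Submodule.norm_starProjection_apply_le _ _

lemma starProjection_resample (W : Submodule ℝ E) [W.HasOrthogonalProjection] (b z : E) :
    W.starProjection (resample W b z) = W.starProjection b := by
  simp [resample, starProjection_starProjection_of_le le_rfl]

lemma inner_resample (W : Submodule ℝ E) [W.HasOrthogonalProjection] (w b z : E) :
    inner ℝ w (resample W b z)
      = inner ℝ (W.starProjection w) b + inner ℝ (w - W.starProjection w) z := by
  rw [resample, inner_add_right, inner_sub_right, inner_sub_left,
    Submodule.inner_starProjection_left_eq_right, Submodule.inner_starProjection_left_eq_right]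

lemma map_resample_stdGaussian [FiniteDimensional ℝ E] [MeasurableSpace E] [BorelSpace E]
    (W : Submodule ℝ E) : (γ[E].prod γ[E]).map (fun p => resample W p.1 p.2) = γ[E] := by
  have hm : Measurable fun p : E × E => resample W p.1 p.2 := by unfold resample; fun_prop
  have : IsProbabilityMeasure ((γ[E].prod γ[E]).map fun p => resample W p.1 p.2) :=
    Measure.isProbabilityMeasure_map hm.aemeasurable
  have hl : ∀ ξ : E, ∫⁻ x, ENNReal.ofReal (Real.exp (inner ℝ ξ x))
        ∂((γ[E].prod γ[E]).map fun p => resample W p.1 p.2)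
      = ENNReal.ofReal (Real.exp (‖ξ‖ ^ 2 / 2)) := by
    intro ξ
    rw [lintegral_map (by fun_prop) hm]
    simp only [inner_resample, Real.exp_add, ENNReal.ofReal_mul (Real.exp_pos _).le]
    rw [lintegral_prod_mul (f := fun b : E => ENNReal.ofReal (Real.exp (inner ℝ _ b)))
        (g := fun z : E => ENNReal.ofReal (Real.exp (inner ℝ _ z))) (by fun_prop) (by fun_prop),
      lintegral_exp_inner_stdGaussian, lintegral_exp_inner_stdGaussian,
      ← ENNReal.ofReal_mul (Real.exp_pos _).le, ← Real.exp_add, ← add_div,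
      ← norm_sq_eq_add_norm_sq_sub_starProjection]
  refine measure_ext_of_laplace (fun ξ => ?_) fun ξ => ?_
  · exact hl ξ ▸ ENNReal.ofReal_ne_top
  · rw [hl, lintegral_exp_inner_stdGaussian]

lemma lintegral_exp_sq_gaussianReal_le {l : ℝ} (h0 : 0 ≤ l) (h1 : l ≤ 1 / 2) :
    ∫⁻ x, ENNReal.ofReal (Real.exp (l * x ^ 2 / 2)) ∂(gaussianReal 0 1)
      ≤ ENNReal.ofReal (Real.exp l) := by
  have hdens : ∀ x : ℝ, gaussianPDF 0 1 x * ENNReal.ofReal (Real.exp (l * x ^ 2 / 2))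
      = ENNReal.ofReal ((√(2 * Real.pi))⁻¹ * Real.exp (-((1 - l) / 2) * x ^ 2)) := by
    intro x
    rw [gaussianPDF, gaussianPDFReal, ← ENNReal.ofReal_mul (by positivity), mul_assoc,
      ← Real.exp_add]
    congr 3
    · simp
    · push_cast; ring
  rw [gaussianReal_of_var_ne_zero _ one_ne_zero,
    lintegral_withDensity_eq_lintegral_mul _ (measurable_gaussianPDF _ _) (by fun_prop)]
  simp only [Pi.mul_apply, hdens]
  rw [← ofReal_integral_eq_lintegral_ofReal
    ((integrable_exp_neg_mul_sq (by linarith)).const_mul _) (ae_of_all _ fun x => by positivity)]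
  refine ENNReal.ofReal_le_ofReal ?_
  have hnorm : (2 * Real.pi)⁻¹ * (Real.pi / ((1 - l) / 2)) = 1 / (1 - l) := by
    have : 1 - l ≠ 0 := by linarith
    field_simp
  rw [integral_const_mul, integral_gaussian, ← Real.sqrt_inv, ← Real.sqrt_mul (by positivity),
    hnorm, Real.sqrt_le_left (Real.exp_pos _).le, div_le_iff₀ (by linarith), ← Real.exp_nat_mul]
  have := Real.add_one_le_exp ((2 : ℕ) * l)
  push_cast at this ⊢
  nlinarith

lemma sum_norm_sq_eq_sum_norm_sq_adjoint [FiniteDimensional ℝ E] [FiniteDimensional ℝ F]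
    [Fintype ι] [Fintype κ] (e : OrthonormalBasis ι ℝ E) (f : OrthonormalBasis κ ℝ F)
    (T : E →L[ℝ] F) :
    ∑ i, ‖T (e i)‖ ^ 2 = ∑ j, ‖ContinuousLinearMap.adjoint T (f j)‖ ^ 2 := by
  simp_rw [← f.sum_sq_inner_right, ← e.sum_sq_inner_right,
    ContinuousLinearMap.adjoint_inner_right]
  rw [Finset.sum_comm]
  simp_rw [real_inner_comm]

lemma sum_norm_sq_eq_of_orthonormalBasis [FiniteDimensional ℝ E] [FiniteDimensional ℝ F]
    [Fintype ι] [Fintype κ] (e : OrthonormalBasis ι ℝ E) (e' : OrthonormalBasis κ ℝ E)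
    (T : E →L[ℝ] F) : ∑ i, ‖T (e i)‖ ^ 2 = ∑ i, ‖T (e' i)‖ ^ 2 := by
  rw [sum_norm_sq_eq_sum_norm_sq_adjoint e (stdOrthonormalBasis ℝ F),
    sum_norm_sq_eq_sum_norm_sq_adjoint e' (stdOrthonormalBasis ℝ F)]

lemma exists_orthonormalBasis_norm_sq_map [FiniteDimensional ℝ E] [FiniteDimensional ℝ F]
    (T : E →L[ℝ] F) : ∃ p : OrthonormalBasis (Fin (Module.finrank ℝ E)) ℝ E,
      ∀ x, ‖T x‖ ^ 2 = ∑ i, ‖T (p i)‖ ^ 2 * inner ℝ (p i) x ^ 2 := by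
  set A : E →ₗ[ℝ] E := (ContinuousLinearMap.adjoint T ∘L T).toLinearMap
  have hA : ∀ x y, inner ℝ x (A y) = inner ℝ (T x) (T y) := fun x y =>
    ContinuousLinearMap.adjoint_inner_right T x (T y)
  have hsymm : A.IsSymmetric := fun x y => by rw [real_inner_comm, hA, hA, real_inner_comm]
  set p := hsymm.eigenvectorBasis rfl
  have hAp : ∀ i, A (p i) = ‖T (p i)‖ ^ 2 • p i := by
    intro i
    have heig : A (p i) = hsymm.eigenvalues rfl i • p i := hsymm.apply_eigenvectorBasis rfl i
    have hi := hA (p i) (p i)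
    rw [heig, inner_smul_right, real_inner_self_eq_norm_sq, real_inner_self_eq_norm_sq,
      p.orthonormal.1 i, one_pow, mul_one] at hi
    rw [heig, hi]
  refine ⟨p, fun x => ?_⟩
  rw [← real_inner_self_eq_norm_sq, ← hA, ← p.sum_inner_mul_inner]
  refine Finset.sum_congr rfl fun i _ => ?_
  rw [← hsymm, hAp, real_inner_smul_left, real_inner_comm x]
  ring

lemma lintegral_pi_prod [Fintype ι] {X : ι → Type*} [∀ i, MeasurableSpace (X i)]
    (μ : ∀ i, Measure (X i)) [∀ i, IsProbabilityMeasure (μ i)] (f : ∀ i, X i → ℝ≥0∞)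
    (hf : ∀ i, Measurable (f i)) :
    ∫⁻ x, ∏ i, f i (x i) ∂(Measure.pi μ) = ∏ i, ∫⁻ x, f i x ∂(μ i) := by
  refine (lintegral_prod_eq_prod_lintegral_of_indepFun Finset.univ
    (fun i (x : ∀ i, X i) => f i (x i)) (iIndepFun_pi fun i => (hf i).aemeasurable)
    fun i => (hf i).comp (measurable_pi_apply i)).trans ?_
  exact Finset.prod_congr rfl fun i _ =>
    (measurePreserving_eval μ i).lintegral_comp (hf i)

lemma lintegral_exp_norm_sq_stdGaussian_le [FiniteDimensional ℝ E] [MeasurableSpace E]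
    [BorelSpace E] [FiniteDimensional ℝ F] [Fintype ι] (e : OrthonormalBasis ι ℝ E)
    (T : E →L[ℝ] F) {c : ℝ} (hc : 0 ≤ c) (hT : c * ‖T‖ ^ 2 ≤ 1 / 2) :
    ∫⁻ x, ENNReal.ofReal (Real.exp (c * ‖T x‖ ^ 2 / 2)) ∂γ[E]
      ≤ ENNReal.ofReal (Real.exp (c * ∑ i, ‖T (e i)‖ ^ 2)) := by
  obtain ⟨p, hp⟩ := exists_orthonormalBasis_norm_sq_map T
  have hle : ∀ i, c * ‖T (p i)‖ ^ 2 ≤ 1 / 2 := fun i => by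
    have := T.le_opNorm (p i)
    rw [p.orthonormal.1 i, mul_one] at this
    exact (by gcongr : c * ‖T (p i)‖ ^ 2 ≤ c * ‖T‖ ^ 2).trans hT
  have hprod : ∀ x : Fin (Module.finrank ℝ E) → ℝ,
      ENNReal.ofReal (Real.exp (c * ‖T (∑ i, x i • p i)‖ ^ 2 / 2))
        = ∏ i, ENNReal.ofReal (Real.exp (c * ‖T (p i)‖ ^ 2 * x i ^ 2 / 2)) := by
    intro x
    rw [← ENNReal.ofReal_prod_of_nonneg fun i _ => (Real.exp_pos _).le, ← Real.exp_sum, hp,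
      Finset.mul_sum, Finset.sum_div]
    simp only [p.orthonormal.inner_right_fintype, mul_assoc]
  rw [stdGaussian_eq_map_pi_orthonormalBasis p, lintegral_map
    (by fun_prop : Continuous fun x => Real.exp (c * ‖T x‖ ^ 2 / 2)).measurable.ennreal_ofReal
    (by fun_prop)]
  simp only [hprod]
  rw [lintegral_pi_prod (fun _ => gaussianReal 0 1) (fun i t =>
      ENNReal.ofReal (Real.exp (c * ‖T (p i)‖ ^ 2 * t ^ 2 / 2))) fun i => by fun_prop,
    sum_norm_sq_eq_of_orthonormalBasis e p, Finset.mul_sum, Real.exp_sum,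
    ENNReal.ofReal_prod_of_nonneg fun i _ => (Real.exp_pos _).le]
  exact Finset.prod_le_prod' fun i _ =>
    lintegral_exp_sq_gaussianReal_le (by positivity) (hle i)

end Gaussian

/-! ### Random subspaces -/

section RandomSubspace

variable {E X ι : Type*} [NormedAddCommGroup E] [InnerProductSpace ℝ E] [FiniteDimensional ℝ E]

lemma sum_norm_sq_starProjection [Fintype ι] (e : OrthonormalBasis ι ℝ E) (W : Submodule ℝ E) :
    ∑ i, ‖W.starProjection (e i)‖ ^ 2 = Module.finrank ℝ W := by
  have hproj : LinearMap.IsProj W (W.starProjection : E →ₗ[ℝ] E) :=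
    ⟨W.starProjection_apply_mem, fun _ => Submodule.starProjection_eq_self_iff.2⟩
  rw [← hproj.trace, LinearMap.trace_eq_sum_inner _ e]
  refine Finset.sum_congr rfl fun i _ => ?_
  rw [← real_inner_self_eq_norm_sq, Submodule.inner_starProjection_left_eq_right,
    starProjection_starProjection_of_le le_rfl, ContinuousLinearMap.coe_coe]

-- When `v ∈ W` the residual vanishes and the quotient is `0 / 0 = 0`.
lemma starProjection_sup_span_singleton (W : Submodule ℝ E) (v w : E) :
    (W ⊔ Submodule.span ℝ {v}).starProjection w
      = W.starProjection w
        + (inner ℝ (v - W.starProjection v) w / ‖v - W.starProjection v‖ ^ 2)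
          • (v - W.starProjection v) := by
  set z := v - W.starProjection v with hz
  set c := inner ℝ z w / ‖z‖ ^ 2 with hc
  have hWz : ∀ y ∈ W, inner ℝ z y = 0 := fun y => W.starProjection_inner_eq_zero v y
  have hcz : c * inner ℝ z z = inner ℝ z w := by
    rw [real_inner_self_eq_norm_sq]
    by_cases h : z = 0
    · simp [h]
    · rw [hc]; field_simp [norm_ne_zero_iff.2 h]
  have hW : ∀ y ∈ W, inner ℝ (w - (W.starProjection w + c • z)) y = 0 := fun y hy => by
    rw [← sub_sub, inner_sub_left, W.starProjection_inner_eq_zero w y hy,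
      real_inner_smul_left, hWz y hy, mul_zero, sub_zero]
  have hzz : inner ℝ (w - (W.starProjection w + c • z)) z = 0 := by
    rw [inner_sub_left, inner_add_left, real_inner_smul_left, hcz, real_inner_comm z w,
      real_inner_comm z (W.starProjection w), hWz _ (W.starProjection_apply_mem w)]
    ring
  refine Submodule.eq_starProjection_of_mem_of_inner_eq_zero ?_ fun y hy => ?_
  · have hPW : ∀ y, W.starProjection y ∈ W ⊔ Submodule.span ℝ {v} := fun y =>
      Submodule.mem_sup_left (W.starProjection_apply_mem y)
    exact add_mem (hPW w) <| Submodule.smul_mem _ _ <|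
      sub_mem (Submodule.mem_sup_right (Submodule.mem_span_singleton_self v)) (hPW v)
  · obtain ⟨x, hx, _, ha, rfl⟩ := Submodule.mem_sup.1 hy
    obtain ⟨a, rfl⟩ := Submodule.mem_span_singleton.1 ha
    have hv : inner ℝ (w - (W.starProjection w + c • z)) v = 0 := by
      rw [show v = z + W.starProjection v by rw [hz]; abel, inner_add_right, hzz,
        hW _ (W.starProjection_apply_mem v), add_zero]
    rw [inner_add_right, hW x hx, real_inner_smul_right, hv, mul_zero, add_zero]

variable [MeasurableSpace E] [MeasurableSpace X]

/-- A subspace depending measurably on a parameter, in the sense that its orthogonal projection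
is jointly measurable in the parameter and the projected vector. -/
def MeasurableSubspace (W : X → Submodule ℝ E) : Prop :=
  Measurable fun p : X × E => (W p.1).starProjection p.2

namespace MeasurableSubspace

lemma bot : MeasurableSubspace fun _ : X => (⊥ : Submodule ℝ E) := by
  simp [MeasurableSubspace]

variable {W : X → Submodule ℝ E}

lemma measurable_starProjection (hW : MeasurableSubspace W) {f : X → E} (hf : Measurable f) :
    Measurable fun x => (W x).starProjection (f x) := by
  have h := hW.comp (measurable_id.prodMk hf)
  simpa only [Function.comp_def, id_eq] using h

lemma comp_measurable {Y : Type*} [MeasurableSpace Y] (hW : MeasurableSubspace W) {g : Y → X}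
    (hg : Measurable g) : MeasurableSubspace fun y => W (g y) := by
  have h := hW.comp ((hg.comp measurable_fst).prodMk measurable_snd)
  simpa only [MeasurableSubspace, Function.comp_def] using h

variable [BorelSpace E]

lemma measurable_norm_sq (hW : MeasurableSubspace W) (w : E) :
    Measurable fun x => ‖(W x).starProjection w‖ ^ 2 :=
  (hW.measurable_starProjection measurable_const).norm.pow_const 2

lemma measurable_finrank (hW : MeasurableSubspace W) :
    Measurable fun x => (Module.finrank ℝ (W x) : ℝ) := by
  simp only [← sum_norm_sq_starProjection (stdOrthonormalBasis ℝ E)]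
  exact Finset.measurable_fun_sum _ fun i _ => hW.measurable_norm_sq _

lemma sup_span_singleton (hW : MeasurableSubspace W) {f : X → E} (hf : Measurable f) :
    MeasurableSubspace fun x => W x ⊔ Submodule.span ℝ {f x} := by
  simp only [MeasurableSubspace, starProjection_sup_span_singleton]
  have hz : Measurable fun p : X × E => f p.1 - (W p.1).starProjection (f p.1) :=
    (hf.sub (hW.measurable_starProjection hf)).comp measurable_fst
  exact hW.add (((hz.inner measurable_snd).div (hz.norm.pow_const 2)).smul hz)

lemma sup_span_range [Finite ι] (hW : MeasurableSubspace W) {f : ι → X → E}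
    (hf : ∀ i, Measurable (f i)) :
    MeasurableSubspace fun x => W x ⊔ Submodule.span ℝ (Set.range fun i => f i x) := by
  cases nonempty_fintype ι
  suffices h : ∀ S : Finset ι,
      MeasurableSubspace fun x => W x ⊔ S.sup fun i => Submodule.span ℝ {f i x} by
    simpa only [Finset.sup_univ_eq_iSup, ← Submodule.span_range_eq_iSup] using h Finset.univ
  intro S
  induction S using Finset.induction_on with
  | empty => simpa using hW
  | insert i S _ ih =>
    have hins : ∀ x, W x ⊔ (insert i S).sup (fun i => Submodule.span ℝ {f i x})
        = (W x ⊔ S.sup fun i => Submodule.span ℝ {f i x}) ⊔ Submodule.span ℝ {f i x} := fun x => by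
      rw [Finset.sup_insert, sup_assoc, sup_comm (S.sup _)]
    exact (funext hins) ▸ ih.sup_span_singleton (hf i)

end MeasurableSubspace

end RandomSubspace

/-! ### Adaptive flags -/

section AdaptiveFlag

variable {E : Type*} [NormedAddCommGroup E] [InnerProductSpace ℝ E] [FiniteDimensional ℝ E]
  [MeasurableSpace E]

/-- The spaces measured by an adaptive procedure: `V j b` stands for the span of the directions
queried in the first `j` rounds on the input `b`. The field `adapted` says that the space after
the next round is determined by the component of the input in the present space. -/
structure AdaptiveFlag (V : ℕ → E → Submodule ℝ E) : Prop where
  zero : ∀ b, V 0 b = ⊥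
  mono : ∀ j b, V j b ≤ V (j + 1) b
  meas : ∀ j, MeasurableSubspace (V j)
  adapted : ∀ j b b', (V j b).starProjection b' = (V j b).starProjection b →
    V (j + 1) b' = V (j + 1) b

/-- The likelihood ratio, at the component of `b` in `W`, of the standard Gaussian measure shifted
by `w` with respect to the centred one. -/
def likelihoodRatio (W : Submodule ℝ E) (w b : E) : ℝ :=
  Real.exp (inner ℝ (W.starProjection w) b - ‖W.starProjection w‖ ^ 2 / 2)

omit [MeasurableSpace E] in
lemma likelihoodRatio_le (W : Submodule ℝ E) {w : E} {τ : ℝ}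
    (hτ : ‖W.starProjection w‖ ^ 2 ≤ τ) (x : ℝ) (b : E) :
    likelihoodRatio W w b
      ≤ Real.exp x + Real.exp (τ - x) * likelihoodRatio W ((2 : ℝ) • w) b := by
  simp only [likelihoodRatio, map_smul, real_inner_smul_left, norm_smul, ← Real.exp_add, mul_pow,
    Real.norm_ofNat]
  rcases le_total (inner ℝ (W.starProjection w) b - ‖W.starProjection w‖ ^ 2 / 2) x with h | h
  · exact (Real.exp_le_exp.2 h).trans (le_add_of_nonneg_right (Real.exp_pos _).le)
  · exact (Real.exp_le_exp.2 (by linarith)).trans (le_add_of_nonneg_left (Real.exp_pos _).le)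

namespace AdaptiveFlag

variable {V : ℕ → E → Submodule ℝ E} (hV : AdaptiveFlag V)
include hV

lemma eq_of_starProjection_eq (j : ℕ) {b b' : E}
    (h : (V j b).starProjection b' = (V j b).starProjection b) : V j b' = V j b := by
  cases j with
  | zero => rw [hV.zero, hV.zero]
  | succ j =>
    refine hV.adapted j b b' ?_
    rw [← starProjection_starProjection_of_le (hV.mono j b), h,
      starProjection_starProjection_of_le (hV.mono j b)]

variable [BorelSpace E]

lemma measurable_resample (j : ℕ) : Measurable fun p : E × E => resample (V j p.1) p.1 p.2 :=
  ((hV.meas j).comp (measurable_fst.prodMk measurable_fst)).add (measurable_snd.sub (hV.meas j))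

lemma measurable_likelihoodRatio (j : ℕ) (w : E) :
    Measurable fun b => likelihoodRatio (V j b) w b :=
  ((((hV.meas j).measurable_starProjection measurable_const).inner measurable_id).sub
    (((hV.meas j).measurable_norm_sq w).div_const 2)).exp

-- The component of a Gaussian vector that an adaptive procedure has not seen is a fresh Gaussian.
lemma lintegral_resample (j : ℕ) {f : E → ℝ≥0∞} (hf : Measurable f) :
    ∫⁻ b, ∫⁻ z, f (resample (V j b) b z) ∂γ[E] ∂γ[E] = ∫⁻ b, f b ∂γ[E] := by
  induction j generalizing f with
  | zero => simp [hV.zero, resample]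
  | succ j ih =>
    have hg : Measurable fun b => ∫⁻ z, f (resample (V (j + 1) b) b z) ∂γ[E] :=
      (hf.comp (hV.measurable_resample (j + 1))).lintegral_prod_right'
    rw [← ih hg, ← ih hf]
    refine lintegral_congr fun b => ?_
    have hcomp : ∀ z₁ z, resample (V (j + 1) (resample (V j b) b z₁)) (resample (V j b) b z₁) z
        = resample (V j b) b (resample (V (j + 1) b) z₁ z) := by
      intro z₁ z
      have hself : ∀ x, (V (j + 1) b).starProjection ((V j b).starProjection x)
          = (V j b).starProjection x := fun x =>
        Submodule.starProjection_eq_self_iff.2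
          (hV.mono j b (Submodule.starProjection_apply_mem _ x))
      rw [hV.adapted j b _ (starProjection_resample _ _ _)]
      simp only [resample, map_add, map_sub, hself,
        starProjection_starProjection_of_le (hV.mono j b)]
      abel
    have hfm : Measurable fun z => f (resample (V j b) b z) :=
      hf.comp (by unfold resample; fun_prop)
    simp only [hcomp]
    conv_rhs => rw [← map_resample_stdGaussian (V (j + 1) b)]
    have hm : Measurable fun p : E × E => resample (V (j + 1) b) p.1 p.2 := by
      unfold resample; fun_prop
    rw [lintegral_map hfm hm]
    exact (lintegral_prod _ (hfm.comp hm).aemeasurable).symm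

-- The Cameron–Martin density averages to `likelihoodRatio` over the component not yet seen.
lemma lintegral_comp_add_right (j : ℕ) (w : E) {f : E → ℝ≥0∞} (hf : Measurable f)
    (hinv : ∀ b z, f (resample (V j b) b z) = f b) :
    ∫⁻ b, f (b + w) ∂γ[E] = ∫⁻ b, f b * ENNReal.ofReal (likelihoodRatio (V j b) w b) ∂γ[E] := by
  rw [← lintegral_map hf (measurable_add_const w), map_add_right_stdGaussian,
    lintegral_withDensity_eq_lintegral_mul _ (by fun_prop) hf,
    ← hV.lintegral_resample j (by fun_prop)]
  refine lintegral_congr fun b => ?_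
  set W := V j b
  have hsplit : ∀ z, ENNReal.ofReal (Real.exp (inner ℝ w (resample W b z) - ‖w‖ ^ 2 / 2))
      = ENNReal.ofReal (likelihoodRatio W w b * Real.exp (-‖w - W.starProjection w‖ ^ 2 / 2))
        * ENNReal.ofReal (Real.exp (inner ℝ (w - W.starProjection w) z)) := by
    intro z
    rw [← ENNReal.ofReal_mul (by unfold likelihoodRatio; positivity), likelihoodRatio,
      ← Real.exp_add, ← Real.exp_add, norm_sq_eq_add_norm_sq_sub_starProjection W w,
      inner_resample]
    ring_nf
  simp only [Pi.mul_apply, hsplit]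
  simp only [W, hinv]
  rw [lintegral_mul_const _ (by fun_prop), lintegral_const_mul _ (by fun_prop),
    lintegral_exp_inner_stdGaussian, ← ENNReal.ofReal_mul (by unfold likelihoodRatio; positivity),
    mul_assoc, ← Real.exp_add, neg_div, neg_add_cancel, Real.exp_zero, mul_one, mul_comm]

lemma lintegral_likelihoodRatio (j : ℕ) (w : E) :
    ∫⁻ b, ENNReal.ofReal (likelihoodRatio (V j b) w b) ∂γ[E] = 1 := by
  simpa using
    (hV.lintegral_comp_add_right j w (f := fun _ => 1) measurable_const fun _ _ => rfl).symm

-- Truncating the likelihood ratio at `exp x` transfers the event to the unshifted measure. Where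
-- it exceeds `exp x`, it is at most `exp (τ - x)` times the ratio for `2 • w`, of integral `1`.
lemma measure_starProjection_crossing_le (j : ℕ) (w : E) (τ τ' x : ℝ) :
    γ[E] {b | ‖(V j (b + w)).starProjection w‖ ^ 2 ≤ τ ∧
        τ' < ‖(V (j + 1) (b + w)).starProjection w‖ ^ 2}
      ≤ ENNReal.ofReal (Real.exp x) * γ[E] {b | τ' < ‖(V (j + 1) b).starProjection w‖ ^ 2}
        + ENNReal.ofReal (Real.exp (τ - x)) := by
  set S : Set E := {b | ‖(V j b).starProjection w‖ ^ 2 ≤ τ ∧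
    τ' < ‖(V (j + 1) b).starProjection w‖ ^ 2} with hS
  have hS' : MeasurableSet {b | τ' < ‖(V (j + 1) b).starProjection w‖ ^ 2} :=
    measurableSet_lt measurable_const ((hV.meas (j + 1)).measurable_norm_sq w)
  have hSm : MeasurableSet S :=
    (measurableSet_le ((hV.meas j).measurable_norm_sq w) measurable_const).inter hS'
  have hinv : ∀ b z, S.indicator (1 : E → ℝ≥0∞) (resample (V j b) b z) = S.indicator 1 b := by
    intro b z
    have hproj := starProjection_resample (V j b) b z
    simp only [Set.indicator_apply, Pi.one_apply, hS, Set.mem_ofPred_eq, hV.adapted j b _ hproj,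
      hV.eq_of_starProjection_eq j hproj]
  calc γ[E] ((fun b => b + w) ⁻¹' S)
      = ∫⁻ b, S.indicator 1 (b + w) ∂γ[E] :=
        (lintegral_indicator_one (measurable_add_const w hSm)).symm
    _ = ∫⁻ b, S.indicator 1 b * ENNReal.ofReal (likelihoodRatio (V j b) w b) ∂γ[E] :=
        hV.lintegral_comp_add_right j w (measurable_one.indicator hSm) hinv
    _ ≤ ∫⁻ b, (ENNReal.ofReal (Real.exp x)
            * {b | τ' < ‖(V (j + 1) b).starProjection w‖ ^ 2}.indicator 1 b
          + ENNReal.ofReal (Real.exp (τ - x))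
            * ENNReal.ofReal (likelihoodRatio (V j b) ((2 : ℝ) • w) b)) ∂γ[E] := by
        refine lintegral_mono fun b => ?_
        by_cases hb : b ∈ S
        · rw [Set.indicator_of_mem hb, Set.indicator_of_mem (Set.mem_ofPred_eq ▸ hb.2),
            ← ENNReal.ofReal_mul (Real.exp_pos _).le]
          simp only [Pi.one_apply, one_mul, mul_one]
          exact (ENNReal.ofReal_le_ofReal (likelihoodRatio_le _ hb.1 x b)).trans
            ENNReal.ofReal_add_le
        · simp [Set.indicator_of_notMem hb]
    _ = _ := by
        rw [lintegral_add_left ((measurable_one.indicator hS').const_mul _),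
          lintegral_const_mul _ (measurable_one.indicator hS'), lintegral_indicator_one hS',
          lintegral_const_mul _ (hV.measurable_likelihoodRatio j _).ennreal_ofReal,
          hV.lintegral_likelihoodRatio, mul_one]

lemma sum_measure_starProjection_gt_le {S : Type*} [Fintype S] (w : S → E) {τ : ℕ → ℝ} {N : ℕ → ℝ}
    (hτ : 0 ≤ τ 0)
    (hN : ∀ j b, ((Finset.univ.filter fun e =>
      τ (j + 1) < ‖(V (j + 1) b).starProjection (w e)‖ ^ 2).card : ℝ) ≤ N j) (T : ℕ) :
    ∑ e, γ[E] {b | τ T < ‖(V T (b + w e)).starProjection (w e)‖ ^ 2}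
      ≤ ∑ j ∈ Finset.range T, ENNReal.ofReal
          (Real.exp (2 * τ j) * N j + Fintype.card S * Real.exp (-τ j)) := by
  induction T with
  | zero => simp [hV.zero, hτ.not_gt]
  | succ T ih =>
    have hcount : ∑ e, γ[E] {b | τ (T + 1) < ‖(V (T + 1) b).starProjection (w e)‖ ^ 2}
        ≤ ENNReal.ofReal (N T) := by
      have hm : ∀ e, MeasurableSet
          {b | τ (T + 1) < ‖(V (T + 1) b).starProjection (w e)‖ ^ 2} := fun e =>
        measurableSet_lt measurable_const ((hV.meas (T + 1)).measurable_norm_sq (w e))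
      simp_rw [← lintegral_indicator_one (hm _)]
      rw [← lintegral_finsetSum _ fun e _ => measurable_one.indicator (hm e)]
      refine (lintegral_mono fun b => ?_).trans (by simp : ∫⁻ _, ENNReal.ofReal (N T) ∂γ[E] ≤ _)
      simp only [Set.indicator_apply, Set.mem_ofPred_eq, Pi.one_apply, Finset.sum_boole]
      rw [← ENNReal.ofReal_natCast]
      exact ENNReal.ofReal_le_ofReal (hN T b)
    have hsplit : ∀ e, γ[E] {b | τ (T + 1) < ‖(V (T + 1) (b + w e)).starProjection (w e)‖ ^ 2}
        ≤ γ[E] {b | τ T < ‖(V T (b + w e)).starProjection (w e)‖ ^ 2}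
          + (ENNReal.ofReal (Real.exp (2 * τ T))
              * γ[E] {b | τ (T + 1) < ‖(V (T + 1) b).starProjection (w e)‖ ^ 2}
            + ENNReal.ofReal (Real.exp (-τ T))) := by
      intro e
      have hstep := hV.measure_starProjection_crossing_le T (w e) (τ T) (τ (T + 1)) (2 * τ T)
      rw [show τ T - 2 * τ T = -τ T by ring] at hstep
      refine (measure_mono fun b hb => ?_).trans
        ((measure_union_le _ _).trans (add_le_add_right hstep _))
      exact (lt_or_ge (τ T) _).imp id fun h => ⟨h, hb⟩
    refine (Finset.sum_le_sum fun e _ => hsplit e).trans ?_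
    rw [Finset.sum_add_distrib, Finset.sum_add_distrib, ← Finset.mul_sum, Finset.sum_range_succ]
    refine add_le_add ih ((add_le_add_left (mul_le_mul_right hcount _) _).trans_eq ?_)
    have hN0 : 0 ≤ N T := (Nat.cast_nonneg _).trans (hN T 0)
    rw [Finset.sum_const, nsmul_eq_mul, Finset.card_univ, ENNReal.ofReal_add (by positivity)
      (by positivity), ENNReal.ofReal_mul (Real.exp_pos _).le,
      ENNReal.ofReal_mul (Nat.cast_nonneg _), ENNReal.ofReal_natCast]

end AdaptiveFlag

end AdaptiveFlag

/-! ### Exponential moments of random signs -/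

section Signs

variable {ι κ F : Type*} [Fintype ι] [Fintype κ] [NormedAddCommGroup F] [InnerProductSpace ℝ F]

/-- A vector of signs, viewed in Euclidean space. -/
def signVec (ε : ι → ℤˣ) : EuclideanSpace ℝ ι :=
  WithLp.toLp 2 fun i => ((ε i : ℤ) : ℝ)

lemma norm_sq_signVec (ε : ι → ℤˣ) : ‖signVec ε‖ ^ 2 = Fintype.card ι := by
  have hsq : ∀ i, ((ε i : ℤ) : ℝ) ^ 2 = 1 := fun i => by
    have h : ((ε i : ℤ)) ^ 2 = 1 := by rw [← Units.val_pow_eq_pow_val, Int.units_sq, Units.val_one]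
    exact_mod_cast h
  simp [EuclideanSpace.real_norm_sq_eq, signVec, hsq]

lemma sum_exp_inner_signVec_le (c : EuclideanSpace ℝ ι) :
    ∑ ε : ι → ℤˣ, Real.exp (inner ℝ c (signVec ε))
      ≤ 2 ^ Fintype.card ι * Real.exp (‖c‖ ^ 2 / 2) := by
  have hexp : ∀ ε : ι → ℤˣ, Real.exp (inner ℝ c (signVec ε))
      = ∏ i, Real.exp ((ε i : ℤ) * c i) := fun ε => by
    rw [← Real.exp_sum, PiLp.inner_apply]
    simp [signVec]
  have hprod := Finset.prod_univ_sum (fun _ : ι => (Finset.univ : Finset ℤˣ))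
    fun i σ => Real.exp ((σ : ℤ) * c i)
  rw [Fintype.piFinset_univ] at hprod
  simp only [hexp]
  rw [← hprod, EuclideanSpace.real_norm_sq_eq, Finset.sum_div, Real.exp_sum, ← Finset.card_univ,
    ← Finset.prod_const, ← Finset.prod_mul_distrib]
  refine Finset.prod_le_prod (fun i _ => by positivity) fun i _ => ?_
  have hcosh := Real.cosh_le_exp_half_sq (c i)
  rw [Real.cosh_eq] at hcosh
  rw [UnitsInt.univ, Finset.sum_pair (by decide)]
  simp only [Units.val_one, Units.val_neg, Int.cast_one, Int.cast_neg, one_mul, neg_mul]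
  linarith

variable [FiniteDimensional ℝ F]

-- Linearising `exp (‖y‖² / 2) = ∫ exp ⟪y, g⟫ dγ(g)` reduces the quadratic form of the signs to
-- linear forms, and afterwards to the same quadratic form of a Gaussian vector.
lemma sum_exp_norm_sq_signVec_le (T : EuclideanSpace ℝ ι →L[ℝ] F) {c : ℝ} (hc : 0 ≤ c)
    (hT : c * ‖T‖ ^ 2 ≤ 1 / 2) :
    ∑ ε : ι → ℤˣ, Real.exp (c * ‖T (signVec ε)‖ ^ 2 / 2)
      ≤ 2 ^ Fintype.card ι
        * Real.exp (c * ∑ i, ‖T (EuclideanSpace.basisFun ι ℝ i)‖ ^ 2) := by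
  borelize F
  set T' := ContinuousLinearMap.adjoint T
  have hlin : ∀ y, ENNReal.ofReal (Real.exp (c * ‖T y‖ ^ 2 / 2))
      = ∫⁻ g, ENNReal.ofReal (Real.exp (inner ℝ (√c • T' g) y)) ∂γ[F] := fun y => by
    have h := lintegral_exp_inner_stdGaussian (√c • T y)
    rw [norm_smul, mul_pow, Real.norm_eq_abs, sq_abs, Real.sq_sqrt hc] at h
    refine h.symm.trans (lintegral_congr fun g => ?_)
    rw [real_inner_smul_left, real_inner_smul_left, ContinuousLinearMap.adjoint_inner_left,
      real_inner_comm]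
  refine (ENNReal.ofReal_le_ofReal_iff (by positivity)).1 ?_
  calc ENNReal.ofReal (∑ ε : ι → ℤˣ, Real.exp (c * ‖T (signVec ε)‖ ^ 2 / 2))
      = ∫⁻ g, ENNReal.ofReal (∑ ε : ι → ℤˣ, Real.exp (inner ℝ (√c • T' g) (signVec ε)))
          ∂γ[F] := by
        simp_rw [ENNReal.ofReal_sum_of_nonneg fun _ _ => (Real.exp_pos _).le, hlin]
        exact (lintegral_finsetSum _ fun ε _ => by fun_prop).symm
    _ ≤ ∫⁻ g, ENNReal.ofReal (2 ^ Fintype.card ι)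
          * ENNReal.ofReal (Real.exp (c * ‖T' g‖ ^ 2 / 2)) ∂γ[F] := by
        refine lintegral_mono fun g => ?_
        rw [← ENNReal.ofReal_mul (by positivity)]
        refine ENNReal.ofReal_le_ofReal ((sum_exp_inner_signVec_le _).trans_eq ?_)
        rw [norm_smul, mul_pow, Real.norm_eq_abs, sq_abs, Real.sq_sqrt hc]
    _ ≤ _ := by
        rw [lintegral_const_mul _ (by fun_prop), ENNReal.ofReal_mul (by positivity),
          sum_norm_sq_eq_sum_norm_sq_adjoint _ (stdOrthonormalBasis ℝ F)]
        gcongr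
        exact lintegral_exp_norm_sq_stdGaussian_le _ T' hc (by simpa [T'] using hT)

lemma sum_exp_norm_sq_bilin_signVec_le
    (B : EuclideanSpace ℝ ι →ₗ[ℝ] EuclideanSpace ℝ κ →ₗ[ℝ] F)
    (hB : ∀ u v, ‖B u v‖ ≤ ‖u‖ * ‖v‖) {c : ℝ} (hc : 0 ≤ c)
    (hκ : c * Fintype.card κ ≤ 1 / 2) (hι : 2 * c * Fintype.card ι ≤ 1 / 2) :
    ∑ δ : κ → ℤˣ, ∑ ε : ι → ℤˣ, Real.exp (c * ‖B (signVec ε) (signVec δ)‖ ^ 2 / 2)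
      ≤ 2 ^ Fintype.card ι * (2 ^ Fintype.card κ * Real.exp (2 * c * ∑ j, ∑ i,
        ‖B (EuclideanSpace.basisFun ι ℝ i) (EuclideanSpace.basisFun κ ℝ j)‖ ^ 2)) := by
  let T (δ : κ → ℤˣ) : EuclideanSpace ℝ ι →L[ℝ] F :=
    (B.flip (signVec δ)).mkContinuous ‖signVec δ‖ fun u => (hB u _).trans_eq (mul_comm _ _)
  have hT : ∀ δ, c * ‖T δ‖ ^ 2 ≤ 1 / 2 := fun δ => by
    refine le_trans ?_ (norm_sq_signVec δ ▸ hκ)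
    gcongr
    exact LinearMap.mkContinuous_norm_le _ (norm_nonneg _) _
  let L : EuclideanSpace ℝ κ →ₗ[ℝ] PiLp 2 fun _ : ι => F :=
    (WithLp.linearEquiv 2 ℝ (ι → F)).symm ∘ₗ
      LinearMap.pi fun i => B (EuclideanSpace.basisFun ι ℝ i)
  have hL : ∀ v, ‖L v‖ ^ 2 = ∑ i, ‖B (EuclideanSpace.basisFun ι ℝ i) v‖ ^ 2 := fun v =>
    PiLp.norm_sq_eq_of_L2 _ _
  have hLb : ∀ v, ‖L v‖ ≤ √(Fintype.card ι) * ‖v‖ := fun v => by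
    refine (sq_le_sq₀ (norm_nonneg _) (by positivity)).1 ?_
    rw [hL, mul_pow, Real.sq_sqrt (Nat.cast_nonneg _), ← nsmul_eq_mul, ← Finset.card_univ]
    refine Finset.sum_le_card_nsmul _ _ _ fun i _ => ?_
    have hi := hB (EuclideanSpace.basisFun ι ℝ i) v
    rw [(EuclideanSpace.basisFun ι ℝ).orthonormal.1 i, one_mul] at hi
    gcongr
  have hLT : 2 * c * ‖L.mkContinuous _ hLb‖ ^ 2 ≤ 1 / 2 := by
    have hnorm := LinearMap.mkContinuous_norm_le L (Real.sqrt_nonneg _) hLb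
    calc 2 * c * ‖L.mkContinuous _ hLb‖ ^ 2 ≤ 2 * c * √(Fintype.card ι) ^ 2 := by gcongr
      _ ≤ 1 / 2 := by rwa [Real.sq_sqrt (Nat.cast_nonneg _)]
  calc _ ≤ ∑ δ : κ → ℤˣ, 2 ^ Fintype.card ι * Real.exp (2 * c * ‖L (signVec δ)‖ ^ 2 / 2) := by
        refine Finset.sum_le_sum fun δ _ => (sum_exp_norm_sq_signVec_le (T δ) hc (hT δ)).trans_eq ?_
        rw [hL, mul_assoc, mul_div_cancel_left₀ _ two_ne_zero]
        rfl
    _ ≤ _ := by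
        rw [← Finset.mul_sum]
        gcongr
        refine (sum_exp_norm_sq_signVec_le (L.mkContinuous _ hLb) (by positivity) hLT).trans_eq ?_
        simp only [LinearMap.mkContinuous_apply, hL]

end Signs

/-! ### The planted spike -/

section Spike

variable {ι κ : Type*} [Fintype ι] [Fintype κ]

/-- The outer product `u vᵀ`, as a bilinear map into vectorised matrices. -/
def outer : EuclideanSpace ℝ ι →ₗ[ℝ] EuclideanSpace ℝ κ →ₗ[ℝ] EuclideanSpace ℝ (ι × κ) :=
  LinearMap.mk₂ ℝ (fun u v => WithLp.toLp 2 fun p => u p.1 * v p.2)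
    (fun u u' v => by ext p; simp [add_mul]) (fun c u v => by ext p; simp [mul_assoc])
    (fun u v v' => by ext p; simp [mul_add]) (fun c u v => by ext p; simp [mul_left_comm])

omit [Fintype ι] [Fintype κ] in
lemma outer_apply (u : EuclideanSpace ℝ ι) (v : EuclideanSpace ℝ κ) (p : ι × κ) :
    outer u v p = u p.1 * v p.2 := rfl

lemma norm_outer (u : EuclideanSpace ℝ ι) (v : EuclideanSpace ℝ κ) :
    ‖outer u v‖ = ‖u‖ * ‖v‖ := by
  refine (sq_eq_sq₀ (norm_nonneg _) (by positivity)).1 ?_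
  rw [mul_pow]
  simp only [EuclideanSpace.real_norm_sq_eq, outer_apply, mul_pow, Fintype.sum_prod_type,
    Finset.sum_mul_sum]

lemma outer_basisFun (i : ι) (j : κ) :
    outer (EuclideanSpace.basisFun ι ℝ i) (EuclideanSpace.basisFun κ ℝ j)
      = EuclideanSpace.basisFun (ι × κ) ℝ (i, j) := by
  ext ⟨a, b⟩
  simp [outer_apply, ← ite_and, and_comm]

lemma sum_exp_starProjection_outer_signVec_le [Nonempty ι]
    (W : Submodule ℝ (EuclideanSpace ℝ (ι × ι))) :
    ∑ δ : ι → ℤˣ, ∑ ε : ι → ℤˣ,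
        Real.exp (‖W.starProjection (outer (signVec ε) (signVec δ))‖ ^ 2
          / (8 * Fintype.card ι))
      ≤ 4 ^ Fintype.card ι * Real.exp (Module.finrank ℝ W / (2 * Fintype.card ι)) := by
  have : (0 : ℝ) < Fintype.card ι := by exact_mod_cast Fintype.card_pos
  have h := sum_exp_norm_sq_bilin_signVec_le
    (outer.compr₂ W.starProjection.toLinearMap)
    (fun u v => (W.norm_starProjection_apply_le _).trans_eq (norm_outer u v))
    (c := 1 / (4 * Fintype.card ι)) (by positivity) (by field_simp; norm_num)
    (by field_simp; norm_num)
  have htrace : ∑ j : ι, ∑ i : ι, ‖W.starProjection (EuclideanSpace.basisFun (ι × ι) ℝ (i, j))‖ ^ 2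
      = Module.finrank ℝ W := by
    rw [Finset.sum_comm, ← sum_norm_sq_starProjection (EuclideanSpace.basisFun (ι × ι) ℝ),
      Fintype.sum_prod_type]
  simp only [LinearMap.compr₂_apply, ContinuousLinearMap.coe_coe, outer_basisFun, htrace] at h
  convert h using 1
  · exact Finset.sum_congr rfl fun _ _ => Finset.sum_congr rfl fun _ _ => by congr 1; ring
  · rw [← mul_assoc, ← mul_pow]
    norm_num
    ring

/-- The planted rank-one matrix `(64 / √s) u vᵀ`, where `s` is the dimension and `u`, `v` are the
two sign vectors `e.1`, `e.2`. -/
def spike (e : (ι → ℤˣ) × (ι → ℤˣ)) : EuclideanSpace ℝ (ι × ι) :=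
  (64 / √(Fintype.card ι)) • outer (signVec e.1) (signVec e.2)

lemma norm_sq_map_spike {F : Type*} [NormedAddCommGroup F] [NormedSpace ℝ F]
    (T : EuclideanSpace ℝ (ι × ι) →L[ℝ] F) (e : (ι → ℤˣ) × (ι → ℤˣ)) :
    ‖T (spike e)‖ ^ 2
      = 4096 / Fintype.card ι * ‖T (outer (signVec e.1) (signVec e.2))‖ ^ 2 := by
  rw [spike, map_smul, norm_smul, mul_pow, Real.norm_eq_abs, sq_abs, div_pow,
    Real.sq_sqrt (Nat.cast_nonneg _)]
  norm_num

lemma norm_sq_spike (e : (ι → ℤˣ) × (ι → ℤˣ)) :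
    ‖spike e‖ ^ 2 = 4096 * Fintype.card ι := by
  have h := norm_sq_map_spike (.id ℝ (EuclideanSpace ℝ (ι × ι))) e
  rw [ContinuousLinearMap.id_apply, ContinuousLinearMap.id_apply, norm_outer, mul_pow,
    norm_sq_signVec, norm_sq_signVec] at h
  rw [h]
  rcases eq_or_ne (Fintype.card ι : ℝ) 0 with h0 | h0
  · simp [h0]
  · field_simp

variable [Nonempty ι]

lemma card_lt_norm_sq_starProjection_spike_le (W : Submodule ℝ (EuclideanSpace ℝ (ι × ι)))
    (τ : ℝ) :
    ((Finset.univ.filter fun e : (ι → ℤˣ) × (ι → ℤˣ) =>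
      τ < ‖W.starProjection (spike e)‖ ^ 2).card : ℝ)
      ≤ 4 ^ Fintype.card ι
        * Real.exp (Module.finrank ℝ W / (2 * Fintype.card ι) - τ / 32768) := by
  set f : (ι → ℤˣ) × (ι → ℤˣ) → ℝ := fun e =>
    ‖W.starProjection (outer (signVec e.1) (signVec e.2))‖ ^ 2 / (8 * Fintype.card ι)
  have hf : ∑ e, Real.exp (f e)
      ≤ 4 ^ Fintype.card ι * Real.exp (Module.finrank ℝ W / (2 * Fintype.card ι)) := by
    refine le_of_eq_of_le ?_ (sum_exp_starProjection_outer_signVec_le W)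
    rw [Finset.sum_comm, Fintype.sum_prod_type]
  rw [Real.exp_sub, ← mul_div_assoc, le_div_iff₀ (Real.exp_pos _), ← nsmul_eq_mul,
    ← Finset.sum_const]
  refine le_trans ?_ hf
  refine (Finset.sum_le_sum fun e he => Real.exp_le_exp.2 ?_).trans
    (Finset.sum_le_sum_of_subset_of_nonneg (Finset.filter_subset _ _) fun _ _ _ =>
      (Real.exp_pos _).le)
  have hlt := (Finset.mem_filter.1 he).2
  rw [norm_sq_map_spike] at hlt
  calc τ / 32768
      ≤ 4096 / Fintype.card ι
        * ‖W.starProjection (outer (signVec e.1) (signVec e.2))‖ ^ 2 / 32768 := by gcongr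
    _ = f e := by simp only [f]; ring

/-- The threshold for the squared norm of the projection of the spike to the space of the first
`j` rounds, where `κ` is the number of queries per round divided by the dimension. Its growth
makes `card_lt_norm_sq_starProjection_spike_le` beat the likelihood ratio in every round. -/
def threshold (κ : ℝ) (j : ℕ) : ℝ := 8 * κ * 2 ^ (17 * j)

lemma mul_le_threshold {κ : ℝ} (hκ : 0 ≤ κ) (j : ℕ) : 8 * (j + 1) * κ ≤ threshold κ j := by
  have hpow : (j : ℝ) + 1 ≤ 2 ^ (17 * j) := by
    exact_mod_cast (Nat.lt_two_pow_self (n := j)).trans_le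
      (Nat.pow_le_pow_right two_pos (by lia))
  rw [threshold]
  nlinarith

lemma card_threshold_lt_norm_sq_starProjection_spike_le
    (W : Submodule ℝ (EuclideanSpace ℝ (ι × ι))) {κ : ℝ} (hκ : 0 ≤ κ) {j : ℕ}
    (hW : (Module.finrank ℝ W : ℝ) ≤ (j + 1) * κ * Fintype.card ι) :
    ((Finset.univ.filter fun e : (ι → ℤˣ) × (ι → ℤˣ) =>
      threshold κ (j + 1) < ‖W.starProjection (spike e)‖ ^ 2).card : ℝ)
      ≤ 4 ^ Fintype.card ι * Real.exp (-3 * threshold κ j) := by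
  have : (0 : ℝ) < Fintype.card ι := by exact_mod_cast Fintype.card_pos
  refine (card_lt_norm_sq_starProjection_spike_le W _).trans ?_
  have hdim : (Module.finrank ℝ W : ℝ) / (2 * Fintype.card ι) ≤ (j + 1) * κ / 2 := by
    rw [div_le_div_iff₀ (by positivity) two_pos]
    linarith
  have hstep : threshold κ (j + 1) / 32768 = 4 * threshold κ j := by
    simp only [threshold, mul_add, pow_add]
    ring
  have hthr := mul_le_threshold hκ j
  have h0 : 0 ≤ (j + 1) * κ := by positivity
  gcongr
  linarith

lemma sum_exp_neg_threshold_le {κ : ℝ} (hκ : 1 ≤ κ) (T : ℕ) :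
    ∑ j ∈ Finset.range T, 2 * Real.exp (-threshold κ j) ≤ 1 / 8 := by
  have hexp : Real.exp (-8) ≤ 1 / 32 := by
    have h2 : Real.exp (-1) ≤ 1 / 2 := by
      rw [Real.exp_neg, ← one_div]
      exact one_div_le_one_div_of_le two_pos (by linarith [Real.add_one_le_exp (1 : ℝ)])
    calc Real.exp (-8) = Real.exp (-1) ^ 8 := by rw [← Real.exp_nat_mul]; norm_num
      _ ≤ (1 / 2) ^ 8 := by gcongr
      _ ≤ 1 / 32 := by norm_num
  have hterm : ∀ j, Real.exp (-threshold κ j) ≤ 1 / 32 * (1 / 2) ^ j := fun j => by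
    have hthr := mul_le_threshold (zero_le_one.trans hκ) j
    calc Real.exp (-threshold κ j) ≤ Real.exp ((j + 1 : ℕ) * (-8)) :=
          Real.exp_le_exp.2 (by push_cast; nlinarith)
      _ = Real.exp (-8) * Real.exp (-8) ^ j := by rw [Real.exp_nat_mul, pow_succ']
      _ ≤ 1 / 32 * (1 / 2) ^ j := by gcongr; exact hexp.trans (by norm_num)
  calc _ ≤ ∑ j ∈ Finset.range T, 1 / 16 * (1 / 2 : ℝ) ^ j :=
        Finset.sum_le_sum fun j _ => by linarith [hterm j]
    _ ≤ 1 / 8 := by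
        rw [← Finset.mul_sum]
        linarith [sum_geometric_two_le T]

lemma AdaptiveFlag.sum_measure_spike_le
    {V : ℕ → EuclideanSpace ℝ (ι × ι) → Submodule ℝ (EuclideanSpace ℝ (ι × ι))}
    (hV : AdaptiveFlag V) {k : ℕ} (hk : Fintype.card ι ≤ k)
    (hrank : ∀ j b, Module.finrank ℝ (V j b) ≤ j * k) (T : ℕ) :
    ∑ e, γ[EuclideanSpace ℝ (ι × ι)] {b | threshold (k / Fintype.card ι) T
        < ‖(V T (b + spike e)).starProjection (spike e)‖ ^ 2}
      ≤ ENNReal.ofReal (4 ^ Fintype.card ι * (1 / 8)) := by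
  have hs : (0 : ℝ) < Fintype.card ι := by exact_mod_cast Fintype.card_pos
  set κ : ℝ := k / Fintype.card ι with hκ
  have hκ1 : 1 ≤ κ := by
    rw [hκ, one_le_div hs]
    exact_mod_cast hk
  have hN : ∀ j b, ((Finset.univ.filter fun e =>
      threshold κ (j + 1) < ‖(V (j + 1) b).starProjection (spike e)‖ ^ 2).card : ℝ)
        ≤ 4 ^ Fintype.card ι * Real.exp (-3 * threshold κ j) := fun j b => by
    refine card_threshold_lt_norm_sq_starProjection_spike_le _ (zero_le_one.trans hκ1) ?_
    rw [hκ, ← mul_div_assoc, mul_div_assoc _ (k : ℝ), mul_assoc, div_mul_cancel₀ _ hs.ne']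
    exact_mod_cast hrank (j + 1) b
  have hcard : (Fintype.card ((ι → ℤˣ) × (ι → ℤˣ)) : ℝ) = 4 ^ Fintype.card ι := by
    simp [← mul_pow]
  have hτ : 0 ≤ threshold κ 0 := by unfold threshold; positivity
  refine (hV.sum_measure_starProjection_gt_le spike hτ hN T).trans ?_
  rw [← ENNReal.ofReal_sum_of_nonneg fun j _ => by positivity]
  refine ENNReal.ofReal_le_ofReal ?_
  refine le_of_eq_of_le ?_ (mul_le_mul_of_nonneg_left (sum_exp_neg_threshold_le hκ1 T)
    (by positivity : (0 : ℝ) ≤ 4 ^ Fintype.card ι))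
  rw [Finset.mul_sum]
  refine Finset.sum_congr rfl fun j _ => ?_
  rw [hcard, mul_left_comm, ← Real.exp_add]
  ring_nf

lemma exists_spike_measure_prod_le {Ω : Type*} [MeasurableSpace Ω] (μ : Measure Ω)
    [IsProbabilityMeasure μ]
    {V : Ω → ℕ → EuclideanSpace ℝ (ι × ι) → Submodule ℝ (EuclideanSpace ℝ (ι × ι))}
    (hV : ∀ ω, AdaptiveFlag (V ω)) {k : ℕ} (hk : Fintype.card ι ≤ k)
    (hrank : ∀ ω j b, Module.finrank ℝ (V ω j b) ≤ j * k) (T : ℕ)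
    (hmeas : MeasurableSubspace fun p : Ω × EuclideanSpace ℝ (ι × ι) => V p.1 T p.2) :
    ∃ e : (ι → ℤˣ) × (ι → ℤˣ), (μ.prod γ[EuclideanSpace ℝ (ι × ι)])
      {p | threshold (k / Fintype.card ι) T
        < ‖(V p.1 T (p.2 + spike e)).starProjection (spike e)‖ ^ 2} ≤ ENNReal.ofReal (1 / 8) := by
  set S : (ι → ℤˣ) × (ι → ℤˣ) → Set (Ω × EuclideanSpace ℝ (ι × ι)) := fun e =>
    {p | threshold (k / Fintype.card ι) T
      < ‖(V p.1 T (p.2 + spike e)).starProjection (spike e)‖ ^ 2}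
  have hS : ∀ e, MeasurableSet (S e) := fun e => by
    have hshift : Measurable fun p : Ω × EuclideanSpace ℝ (ι × ι) => (p.1, p.2 + spike e) := by
      fun_prop
    exact measurableSet_lt measurable_const
      ((hmeas.comp_measurable hshift).measurable_norm_sq (spike e))
  by_contra! hlt
  have hsum : ∑ e, (μ.prod γ[EuclideanSpace ℝ (ι × ι)]) (S e)
      ≤ ENNReal.ofReal (4 ^ Fintype.card ι * (1 / 8)) := by
    simp_rw [Measure.prod_apply (hS _)]
    rw [← lintegral_finsetSum _ fun e _ => measurable_measure_prodMk_left (hS e)]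
    refine (lintegral_mono fun ω => (hV ω).sum_measure_spike_le hk (hrank ω) T).trans_eq ?_
    simp
  refine (hsum.trans_eq ?_).not_gt
    (ENNReal.sum_lt_sum_of_nonempty Finset.univ_nonempty fun e _ => hlt e)
  rw [Finset.sum_const, nsmul_eq_mul, ENNReal.ofReal_mul (by positivity)]
  congr 1
  simp [← mul_pow]

end Spike

/-! ### Spaces revealed round by round -/

section Rounds

variable {E : Type*} [NormedAddCommGroup E] [InnerProductSpace ℝ E] [FiniteDimensional ℝ E]

lemma finrank_sup_range_le {W : ℕ → Submodule ℝ E} {d : ℕ}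
    (hW : ∀ j, Module.finrank ℝ (W j) ≤ d) (j : ℕ) :
    Module.finrank ℝ ((Finset.range j).sup W : Submodule ℝ E) ≤ j * d := by
  induction j with
  | zero => rw [Finset.range_zero, Finset.sup_empty, finrank_bot, zero_mul]
  | succ j ih =>
    rw [Finset.range_add_one, Finset.sup_insert, Nat.succ_mul, add_comm]
    exact (Submodule.finrank_add_le_finrank_add_finrank _ _).trans (add_le_add (hW j) ih)

variable {X : Type*} [MeasurableSpace E] [MeasurableSpace X] {W : X → Submodule ℝ E}

namespace MeasurableSubspace

lemma ite_bot {p : X → Prop} [DecidablePred p] (hp : MeasurableSet {x | p x})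
    (hW : MeasurableSubspace W) :
    MeasurableSubspace fun x => if p x then W x else ⊥ := by
  have h : Measurable fun q : X × E => if p q.1 then (W q.1).starProjection q.2 else 0 :=
    Measurable.ite (measurable_fst hp) hW measurable_const
  refine (congrArg Measurable (funext fun q => ?_)).mp h
  by_cases hq : p q.1
  · simp only [hq, if_true]
  · simp [hq]

variable [BorelSpace E]

lemma ite_finrank_le (hW : MeasurableSubspace W) (k : ℕ) :
    MeasurableSubspace fun x => if Module.finrank ℝ (W x) ≤ k then W x else ⊥ := by
  refine hW.ite_bot ?_
  simpa only [Nat.cast_le] using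
    measurableSet_le hW.measurable_finrank (measurable_const (a := (k : ℝ)))

lemma span_range {ι : Type*} [Finite ι] {f : ι → X → E} (hf : ∀ i, Measurable (f i)) :
    MeasurableSubspace fun x => Submodule.span ℝ (Set.range fun i => f i x) := by
  simpa only [bot_sup_eq] using bot.sup_span_range hf

lemma sup {W' : X → Submodule ℝ E} (hW : MeasurableSubspace W) (hW' : MeasurableSubspace W') :
    MeasurableSubspace fun x => W x ⊔ W' x := by
  have hspan : ∀ x, Submodule.span ℝ
      (Set.range fun i => (W' x).starProjection (stdOrthonormalBasis ℝ E i)) = W' x := fun x => by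
    have hrange := Submodule.map_span (W' x).starProjection.toLinearMap
      (Set.range (stdOrthonormalBasis ℝ E))
    rw [← OrthonormalBasis.coe_toBasis, Module.Basis.span_eq, Submodule.map_top,
      Submodule.range_starProjection, ← Set.range_comp] at hrange
    exact hrange.symm
  simpa only [hspan] using hW.sup_span_range fun i => hW'.measurable_starProjection
    (measurable_const (a := stdOrthonormalBasis ℝ E i))

lemma finset_sup {ι : Type*} {W : ι → X → Submodule ℝ E} (hW : ∀ i, MeasurableSubspace (W i))
    (s : Finset ι) : MeasurableSubspace fun x => s.sup fun i => W i x := by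
  induction s using Finset.induction_on with
  | empty => exact bot
  | insert i s _ ih => simpa only [Finset.sup_insert] using (hW i).sup ih

end MeasurableSubspace

lemma adaptiveFlag_sup_range [BorelSpace E] {W : ℕ → E → Submodule ℝ E}
    (hW : ∀ j, MeasurableSubspace (W j))
    (adapted : ∀ j b b', (∀ i < j, ∀ q ∈ W i b, inner ℝ q b' = inner ℝ q b) → W j b' = W j b) :
    AdaptiveFlag fun j b => (Finset.range j).sup fun i => W i b where
  zero _ := rfl
  mono j b := Finset.sup_mono (Finset.range_subset_range.2 j.le_succ)
  meas j := MeasurableSubspace.finset_sup hW _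
  adapted j b b' hb := by
    have hinner : ∀ i < j, ∀ q ∈ W i b, inner ℝ q b' = inner ℝ q b := by
      intro i hi q hq
      have hmem : q ∈ (Finset.range j).sup fun i => W i b :=
        Finset.le_sup (f := fun i => W i b) (Finset.mem_range.2 hi) hq
      rw [← Submodule.starProjection_eq_self_iff.2 hmem,
        Submodule.inner_starProjection_left_eq_right, hb,
        Submodule.inner_starProjection_left_eq_right]
    refine Finset.sup_congr rfl fun i hi => adapted i b b' fun i' hi' => hinner i' ?_
    exact hi'.trans_le (Nat.lt_succ_iff.1 (Finset.mem_range.1 hi))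

end Rounds

/-! ### The spectral norm -/

section SpecNorm

open scoped Matrix.Norms.L2Operator

variable {ι κ : Type*} [Fintype ι] [Fintype κ]

lemma sqNorm_eq_norm_sq (x : EuclideanSpace ℝ ι) : sqNorm x = ‖x‖ ^ 2 :=
  (EuclideanSpace.real_norm_sq_eq x).symm

lemma specNorm_eq_norm (A : Matrix ι κ ℝ) : specNorm A = ‖A‖ := by
  have hball : {x : κ → ℝ | sqNorm x ≤ 1}
      = WithLp.ofLp '' Metric.closedBall (0 : EuclideanSpace ℝ κ) 1 := by
    ext x
    refine Iff.trans ?_ (WithLp.equiv 2 (κ → ℝ)).exists_congr_left.symm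
    simp [← sqNorm_eq_norm_sq, ← sq_le_one_iff₀ (norm_nonneg _)]
  rw [l2_opNorm_def, ← ContinuousLinearMap.sSup_unitClosedBall_eq_norm, specNorm, hball,
    Set.image_image]
  refine congrArg sSup (Set.image_congr fun x _ => ?_)
  rw [← Real.sqrt_sq (norm_nonneg _), ← sqNorm_eq_norm_sq]
  rfl

lemma norm_mulVec_le_specNorm (A : Matrix ι κ ℝ) (x : EuclideanSpace ℝ κ) :
    ‖WithLp.toLp 2 (A *ᵥ x)‖ ≤ specNorm A * ‖x‖ :=
  (A.l2_opNorm_mulVec x).trans_eq (by rw [specNorm_eq_norm])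

lemma specNorm_nonneg (A : Matrix ι κ ℝ) : 0 ≤ specNorm A := by
  rw [specNorm_eq_norm]
  exact norm_nonneg A

lemma specNorm_sub_le (A B : Matrix ι κ ℝ) : specNorm (A - B) ≤ specNorm A + specNorm B := by
  simp only [specNorm_eq_norm]
  exact norm_sub_le A B

lemma singVal_succ_le (A X : Matrix ι κ ℝ) {r : ℕ} (hX : X.rank ≤ r) :
    singVal A (r + 1) ≤ specNorm (A - X) :=
  csInf_le ⟨0, by rintro _ ⟨Y, _, rfl⟩; exact specNorm_nonneg _⟩ ⟨X, hX, rfl⟩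

lemma eq_of_specNorm_sub_le_singVal {A B : Matrix ι κ ℝ} {r : ℕ} {c : ℝ} (hc : 0 ≤ c)
    (hA : A.rank ≤ r) (h : specNorm (A - B) ≤ c * singVal A (r + 1)) : A = B := by
  have hsing : singVal A (r + 1) ≤ 0 :=
    (singVal_succ_le A A hA).trans_eq (by rw [sub_self, specNorm_eq_norm, norm_zero])
  have hnorm := h.trans (mul_nonpos_of_nonneg_of_nonpos hc hsing)
  rw [specNorm_eq_norm] at hnorm
  exact sub_eq_zero.1 (norm_le_zero_iff.1 hnorm)

end SpecNorm

/-! ### The spectral norm of a Gaussian matrix -/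

section GaussianMatrix

variable {ι κ : Type*}

/-- The matrix with a given vectorisation. -/
def matrixOf : EuclideanSpace ℝ (ι × κ) ≃ₗ[ℝ] Matrix ι κ ℝ :=
  (WithLp.linearEquiv 2 ℝ (ι × κ → ℝ)).trans <|
    (LinearEquiv.curry ℝ ℝ ι κ).trans (Matrix.ofLinearEquiv ℝ)

lemma matrixOf_apply (b : EuclideanSpace ℝ (ι × κ)) (i : ι) (j : κ) :
    matrixOf b i j = b (i, j) := rfl

variable [Fintype ι] [Fintype κ]

/-- The evaluation `b ↦ b y` of vectorised matrices, as the adjoint of `x ↦ x yᵀ`. -/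
def evalAt (y : EuclideanSpace ℝ κ) : EuclideanSpace ℝ (ι × κ) →L[ℝ] EuclideanSpace ℝ ι :=
  ContinuousLinearMap.adjoint (outer.flip y).toContinuousLinearMap

lemma evalAt_apply (y : EuclideanSpace ℝ κ) (b : EuclideanSpace ℝ (ι × κ)) :
    evalAt y b = WithLp.toLp 2 (matrixOf b *ᵥ y) := by
  refine ext_inner_right ℝ fun x => ?_
  rw [evalAt, ContinuousLinearMap.adjoint_inner_left]
  change inner ℝ b (outer x y) = _
  simp only [PiLp.inner_apply, outer_apply, Fintype.sum_prod_type, mulVec, dotProduct,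
    matrixOf_apply, RCLike.inner_apply, conj_trivial, Finset.mul_sum]
  exact Finset.sum_congr rfl fun i _ => Finset.sum_congr rfl fun j _ => by ring

lemma norm_evalAt_le (y : EuclideanSpace ℝ κ) :
    ‖(evalAt y : EuclideanSpace ℝ (ι × κ) →L[ℝ] EuclideanSpace ℝ ι)‖ ≤ ‖y‖ := by
  rw [evalAt, LinearIsometryEquiv.norm_map]
  exact ContinuousLinearMap.opNorm_le_bound _ (norm_nonneg y) fun x =>
    ((norm_outer x y).trans (mul_comm _ _)).le

lemma sum_norm_sq_evalAt_basisFun (y : EuclideanSpace ℝ κ) :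
    ∑ p, ‖(evalAt y (EuclideanSpace.basisFun (ι × κ) ℝ p) : EuclideanSpace ℝ ι)‖ ^ 2
      = Fintype.card ι * ‖y‖ ^ 2 := by
  have hterm (i : ι) : ‖outer (EuclideanSpace.basisFun ι ℝ i) y‖ ^ 2 = ‖y‖ ^ 2 := by
    rw [norm_outer, OrthonormalBasis.norm_eq_one, one_mul]
  rw [sum_norm_sq_eq_sum_norm_sq_adjoint _ (EuclideanSpace.basisFun ι ℝ), evalAt,
    ContinuousLinearMap.adjoint_adjoint, ← nsmul_eq_mul, ← Finset.card_univ, ← Finset.sum_const]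
  exact Finset.sum_congr rfl fun i _ => hterm i

lemma lintegral_exp_norm_sq_evalAt_le {y : EuclideanSpace ℝ κ} (hy : ‖y‖ ≤ 2) :
    ∫⁻ b, ENNReal.ofReal (Real.exp (‖(evalAt y b : EuclideanSpace ℝ ι)‖ ^ 2 / 16))
        ∂γ[EuclideanSpace ℝ (ι × κ)]
      ≤ ENNReal.ofReal (Real.exp (Fintype.card ι / 2)) := by
  have hy4 : ‖y‖ ^ 2 ≤ 4 := by nlinarith [norm_nonneg y]
  have hop : 1 / 8 * ‖(evalAt y : EuclideanSpace ℝ (ι × κ) →L[ℝ] EuclideanSpace ℝ ι)‖ ^ 2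
      ≤ 1 / 2 := by
    have := pow_le_pow_left₀ (norm_nonneg _) (norm_evalAt_le (ι := ι) y) 2
    linarith
  have h := lintegral_exp_norm_sq_stdGaussian_le (EuclideanSpace.basisFun (ι × κ) ℝ)
    (evalAt y) (by norm_num) hop
  rw [sum_norm_sq_evalAt_basisFun] at h
  calc _ = _ := lintegral_congr fun b => by congr 2; ring
    _ ≤ _ := h
    _ ≤ _ := by
      gcongr
      nlinarith [(Fintype.card ι).cast_nonneg (α := ℝ)]

/-- The exponential moment `∫_{‖y‖ < 2} exp (‖b y‖² / 16) dy`: a smooth substitute for the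
maximum of `‖b y‖` over a net of the unit ball. -/
def ballExpMoment (b : EuclideanSpace ℝ (ι × κ)) : ℝ≥0∞ :=
  ∫⁻ y in Metric.ball (0 : EuclideanSpace ℝ κ) 2,
    ENNReal.ofReal (Real.exp (‖(evalAt y b : EuclideanSpace ℝ ι)‖ ^ 2 / 16))

lemma measurable_exp_norm_sq_evalAt :
    Measurable fun p : EuclideanSpace ℝ (ι × κ) × EuclideanSpace ℝ κ =>
      ENNReal.ofReal (Real.exp (‖(evalAt p.2 p.1 : EuclideanSpace ℝ ι)‖ ^ 2 / 16)) := by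
  have hmat : Continuous (matrixOf : EuclideanSpace ℝ (ι × κ) → Matrix ι κ ℝ) :=
    matrixOf.toLinearMap.continuous_of_finiteDimensional
  have heval : Continuous fun p : EuclideanSpace ℝ (ι × κ) × EuclideanSpace ℝ κ =>
      (evalAt p.2 p.1 : EuclideanSpace ℝ ι) := by
    simp only [evalAt_apply]
    exact (PiLp.continuous_toLp 2 _).comp <| (hmat.comp continuous_fst).matrix_mulVec
      ((PiLp.continuous_ofLp 2 _).comp continuous_snd)
  exact ((heval.norm.pow 2).div_const 16).measurable.exp.ennreal_ofReal

lemma lintegral_ballExpMoment_le :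
    ∫⁻ b : EuclideanSpace ℝ (ι × κ), ballExpMoment b ∂γ[EuclideanSpace ℝ (ι × κ)]
      ≤ ENNReal.ofReal (Real.exp (Fintype.card ι / 2)) *
        volume (Metric.ball (0 : EuclideanSpace ℝ κ) 2) := by
  simp only [ballExpMoment]
  rw [lintegral_lintegral_swap measurable_exp_norm_sq_evalAt.aemeasurable, ← setLIntegral_const]
  exact setLIntegral_mono measurable_const fun y hy =>
    lintegral_exp_norm_sq_evalAt_le (mem_ball_zero_iff.1 hy).le

lemma exists_ball_forall_half_opNorm_le {E F : Type*} [NormedAddCommGroup E] [NormedSpace ℝ E]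
    [NormedAddCommGroup F] [NormedSpace ℝ F] (L : E →L[ℝ] F) :
    ∃ x : E, ‖x‖ ≤ 1 ∧ ∀ y ∈ Metric.ball x (1 / 4), ‖L‖ / 2 ≤ ‖L y‖ := by
  rcases (norm_nonneg L).eq_or_lt with h0 | hpos
  · exact ⟨0, by simp, fun y _ => by simp [← h0]⟩
  obtain ⟨x, hx, hLx⟩ := L.exists_lt_apply_of_lt_opNorm (show 3 / 4 * ‖L‖ < ‖L‖ by linarith)
  refine ⟨x, hx.le, fun y hy => ?_⟩
  have hdiff : ‖L x - L y‖ ≤ ‖L‖ * (1 / 4) := by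
    rw [← map_sub]
    exact L.le_opNorm_of_le (by simpa [dist_eq_norm, norm_sub_rev] using (Metric.mem_ball.1 hy).le)
  have := norm_sub_norm_le (L x) (L y)
  linarith

lemma le_ballExpMoment {R : ℝ} (hR : 0 ≤ R) {b : EuclideanSpace ℝ (ι × κ)}
    (hb : 2 * R < specNorm (matrixOf b)) :
    ENNReal.ofReal (Real.exp (R ^ 2 / 16)) *
      volume (Metric.ball (0 : EuclideanSpace ℝ κ) (1 / 4)) ≤ ballExpMoment b := by
  obtain ⟨x, hx, hL⟩ := exists_ball_forall_half_opNorm_le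
    (toEuclideanLin (matrixOf b)).toContinuousLinearMap
  rw [specNorm_eq_norm, l2_opNorm_def, LinearEquiv.trans_apply] at hb
  have hsub : Metric.ball x (1 / 4) ⊆ Metric.ball 0 2 :=
    Metric.ball_subset_ball' (by rw [dist_zero_right]; linarith)
  rw [← Measure.addHaar_ball_center volume x, ← setLIntegral_const]
  refine (setLIntegral_mono (measurable_exp_norm_sq_evalAt.comp measurable_prodMk_left)
    fun y hy => ?_).trans (lintegral_mono_set hsub)
  have hRy : R ≤ ‖evalAt y b‖ := by
    rw [evalAt_apply]
    refine le_trans ?_ (hL y hy)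
    linarith
  simp only [Function.comp_apply]
  gcongr

lemma addHaar_ball_two_le {E : Type*} [NormedAddCommGroup E] [NormedSpace ℝ E]
    [FiniteDimensional ℝ E] [MeasurableSpace E] [BorelSpace E] (ν : Measure E)
    [ν.IsAddHaarMeasure] :
    ν (Metric.ball 0 2) ≤ ENNReal.ofReal (Real.exp (5 / 2 * Module.finrank ℝ E)) *
      ν (Metric.ball 0 (1 / 4)) := by
  have h8 : (8 : ℝ) ≤ Real.exp (5 / 2) := by
    refine (Real.log_le_iff_le_exp (by norm_num)).1 ?_
    rw [show (8 : ℝ) = 2 ^ 3 by norm_num, Real.log_pow]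
    have := Real.log_two_lt_d9
    norm_num
    linarith
  have hscale := Measure.addHaar_ball_mul_of_pos ν 0 (show (0 : ℝ) < 8 by norm_num) (1 / 4)
  rw [show (8 : ℝ) * (1 / 4) = 2 by norm_num] at hscale
  rw [hscale, mul_comm (5 / 2 : ℝ), Real.exp_nat_mul]
  gcongr

theorem measure_two_mul_lt_specNorm_le {R : ℝ} (hR : 0 ≤ R) :
    γ[EuclideanSpace ℝ (ι × κ)] {b | 2 * R < specNorm (matrixOf b)}
      ≤ ENNReal.ofReal
          (Real.exp (Fintype.card ι / 2 + 5 / 2 * Fintype.card κ - R ^ 2 / 16)) := by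
  set v := volume (Metric.ball (0 : EuclideanSpace ℝ κ) (1 / 4))
  have hv0 : v ≠ 0 := (Metric.measure_ball_pos volume _ (by norm_num)).ne'
  have hvt : v ≠ ∞ := measure_ball_lt_top.ne
  have hexp : ENNReal.ofReal (Real.exp (R ^ 2 / 16)) ≠ 0 := by simp [Real.exp_pos]
  have hball := addHaar_ball_two_le (volume : Measure (EuclideanSpace ℝ κ))
  rw [finrank_euclideanSpace] at hball
  have hmarkov : ENNReal.ofReal (Real.exp (R ^ 2 / 16)) * v *
      γ[EuclideanSpace ℝ (ι × κ)] {b | 2 * R < specNorm (matrixOf b)}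
        ≤ ENNReal.ofReal (Real.exp (Fintype.card ι / 2)) *
          (ENNReal.ofReal (Real.exp (5 / 2 * Fintype.card κ)) * v) :=
    calc _ ≤ _ := mul_le_mul_right (measure_mono fun b hb => le_ballExpMoment hR hb) _
      _ ≤ _ := mul_meas_ge_le_lintegral
        (measurable_exp_norm_sq_evalAt.lintegral_prod_right) _
      _ ≤ _ := lintegral_ballExpMoment_le
      _ ≤ _ := by gcongr
  rw [mul_right_comm, ← mul_assoc, ENNReal.mul_le_mul_iff_left hv0 hvt, mul_comm,
    ← ENNReal.le_div_iff_mul_le (.inl hexp) (.inl ENNReal.ofReal_ne_top),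
    ← ENNReal.ofReal_mul (Real.exp_nonneg _), ← ENNReal.ofReal_div_of_pos (Real.exp_pos _),
    ← Real.exp_add, ← Real.exp_sub] at hmarkov
  exact hmarkov

end GaussianMatrix

/-! ### Low-rank approximations capture rank-one matrices -/

section Capture

lemma finrank_map₂_le {𝕜 M N P : Type*} [Field 𝕜] [AddCommGroup M] [Module 𝕜 M]
    [AddCommGroup N] [Module 𝕜 N] [AddCommGroup P] [Module 𝕜 P] (f : M →ₗ[𝕜] N →ₗ[𝕜] P)
    (p : Submodule 𝕜 M) (q : Submodule 𝕜 N) [FiniteDimensional 𝕜 p] [FiniteDimensional 𝕜 q] :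
    Module.finrank 𝕜 (Submodule.map₂ f p q) ≤ Module.finrank 𝕜 p * Module.finrank 𝕜 q := by
  rw [TensorProduct.map₂_eq_range_lift_comp_mapIncl, ← Module.finrank_tensorProduct]
  exact LinearMap.finrank_range_le _

lemma norm_sq_sub_norm_sq_sub_le {E : Type*} [NormedAddCommGroup E] [InnerProductSpace ℝ E]
    (W : Submodule ℝ E) [W.HasOrthogonalProjection] (w : E) {z : E} (hz : z ∈ W) :
    ‖w‖ ^ 2 - ‖w - z‖ ^ 2 ≤ ‖W.starProjection w‖ ^ 2 := by
  have hle : ‖w - W.starProjection w‖ ≤ ‖w - z‖ := by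
    rw [W.starProjection_minimal]
    exact ciInf_le ⟨0, by rintro _ ⟨y, rfl⟩; exact norm_nonneg _⟩ (⟨z, hz⟩ : W)
  have hsq := pow_le_pow_left₀ (norm_nonneg _) hle 2
  have := norm_sq_eq_add_norm_sq_sub_starProjection W w
  linarith

variable {ι κ : Type*}

lemma matrixOf_outer (u : EuclideanSpace ℝ ι) (v : EuclideanSpace ℝ κ) :
    matrixOf (outer u v) = vecMulVec u v := rfl

/-- The vectorised matrices all of whose columns lie in the column space of `B`. -/
def columnSpaceMatrices (B : Matrix ι κ ℝ) : Submodule ℝ (EuclideanSpace ℝ (ι × κ)) :=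
  Submodule.map₂ outer (Submodule.span ℝ (Set.range fun j => WithLp.toLp 2 (B.col j))) ⊤

variable [Fintype κ]

lemma columnSpaceMatrices_eq_span (B : Matrix ι κ ℝ) :
    columnSpaceMatrices B = Submodule.span ℝ (Set.range fun p : κ × κ =>
      outer (WithLp.toLp 2 (B.col p.1)) (EuclideanSpace.basisFun κ ℝ p.2)) := by
  rw [columnSpaceMatrices, ← (EuclideanSpace.basisFun κ ℝ).toBasis.span_eq,
    Submodule.map₂_span_span, Set.image2_range]
  simp only [OrthonormalBasis.coe_toBasis]

lemma finrank_columnSpaceMatrices_le (B : Matrix ι κ ℝ) :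
    Module.finrank ℝ (columnSpaceMatrices B) ≤ B.rank * Fintype.card κ := by
  have := FiniteDimensional.span_of_finite ℝ (Set.finite_range fun j => WithLp.toLp 2 (B.col j))
  refine (finrank_map₂_le _ _ _).trans_eq ?_
  have hspan : Submodule.span ℝ (Set.range fun j => WithLp.toLp 2 (B.col j))
      = (Submodule.span ℝ (Set.range B.col)).map
        (WithLp.linearEquiv 2 ℝ (ι → ℝ)).symm.toLinearMap := by
    rw [Submodule.map_span, ← Set.range_comp]
    rfl
  rw [finrank_top, finrank_euclideanSpace, hspan, LinearEquiv.finrank_map_eq,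
    B.rank_eq_finrank_span_cols]

lemma toLp_mulVec_mem_span_col (B : Matrix ι κ ℝ) (v : κ → ℝ) :
    WithLp.toLp 2 (B *ᵥ v) ∈ Submodule.span ℝ (Set.range fun j => WithLp.toLp 2 (B.col j)) := by
  have h : WithLp.toLp 2 (B *ᵥ v) = ∑ j, v j • WithLp.toLp 2 (B.col j) := by
    ext i
    simp [mulVec, dotProduct, mul_comm]
  rw [h]
  exact Submodule.sum_smul_mem _ _ fun j _ => Submodule.subset_span ⟨j, rfl⟩

variable [Fintype ι]

lemma measurableSubspace_columnSpaceMatrices {X : Type*} [MeasurableSpace X]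
    {B : X → Matrix ι κ ℝ} (hB : ∀ i j, Measurable fun x => B x i j) :
    MeasurableSubspace fun x => columnSpaceMatrices (B x) := by
  simp only [columnSpaceMatrices_eq_span]
  refine MeasurableSubspace.span_range fun p => ?_
  have hout : Continuous fun u : EuclideanSpace ℝ ι =>
      outer u (EuclideanSpace.basisFun κ ℝ p.2) :=
    (outer.flip (EuclideanSpace.basisFun κ ℝ p.2)).continuous_of_finiteDimensional
  exact hout.measurable.comp <| (PiLp.continuous_toLp 2 _).measurable.comp <|
    measurable_pi_lambda _ fun i => hB i p.1

-- The comparison point is the best approximation of `u vᵀ` of the form `x vᵀ` with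
-- `x ∈ span (B v)`; its Frobenius error is `‖(u vᵀ - B) v‖ / ‖v‖`.
lemma norm_sq_outer_sub_sq_specNorm_le (u : EuclideanSpace ℝ ι) (v : EuclideanSpace ℝ κ)
    (B : Matrix ι κ ℝ) :
    ‖outer u v‖ ^ 2 - specNorm (matrixOf (outer u v) - B) ^ 2
      ≤ ‖(columnSpaceMatrices B).starProjection (outer u v)‖ ^ 2 := by
  rcases eq_or_ne v 0 with rfl | hv
  · rw [map_zero, norm_zero, zero_pow two_ne_zero]
    nlinarith [sq_nonneg (specNorm (matrixOf (0 : EuclideanSpace ℝ (ι × κ)) - B)),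
      sq_nonneg ‖(columnSpaceMatrices B).starProjection 0‖]
  have hv' : 0 < ‖v‖ := norm_pos_iff.2 hv
  have hmem : outer ((‖v‖ ^ 2)⁻¹ • WithLp.toLp 2 (B *ᵥ v)) v ∈ columnSpaceMatrices B :=
    Submodule.apply_mem_map₂ _ (Submodule.smul_mem _ _ (toLp_mulVec_mem_span_col B v))
      Submodule.mem_top
  have happly : WithLp.toLp 2 ((matrixOf (outer u v) - B) *ᵥ v)
      = ‖v‖ ^ 2 • (u - (‖v‖ ^ 2)⁻¹ • WithLp.toLp 2 (B *ᵥ v)) := by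
    have hvv : v.ofLp ⬝ᵥ v.ofLp = ‖v‖ ^ 2 := by
      rw [EuclideanSpace.real_norm_sq_eq]
      exact Finset.sum_congr rfl fun i _ => (sq _).symm
    rw [smul_sub, smul_smul, mul_inv_cancel₀ (by positivity), one_smul, sub_mulVec,
      matrixOf_outer, vecMulVec_mulVec, hvv]
    ext i
    simp [mul_comm]
  have hdist : ‖outer u v - outer ((‖v‖ ^ 2)⁻¹ • WithLp.toLp 2 (B *ᵥ v)) v‖
      ≤ specNorm (matrixOf (outer u v) - B) := by
    refine le_of_mul_le_mul_right ?_ hv'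
    refine le_of_eq_of_le ?_ (norm_mulVec_le_specNorm _ v)
    rw [← LinearMap.sub_apply, ← map_sub, norm_outer, happly, norm_smul,
      Real.norm_of_nonneg (by positivity)]
    ring
  refine le_trans ?_ (norm_sq_sub_norm_sq_sub_le _ (outer u v) hmem)
  gcongr

end Capture

/-! ### Padding a matrix with zeros -/

section Pad

open scoped Matrix.Norms.L2Operator

variable {α ι : Type*}

/-- The matrix of the coordinate embedding `ℝ^ι → ℝ^α` along `f`. -/
def coordEmbedding (f : ι → α) : Matrix α ι ℝ := (1 : Matrix α α ℝ).submatrix id f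

lemma transpose_coordEmbedding_mul_self [Fintype α] {f : ι → α} (hf : f.Injective) :
    (coordEmbedding f)ᵀ * coordEmbedding f = 1 := by
  ext i j
  simp [coordEmbedding, mul_apply, one_apply, hf.eq_iff]

lemma submatrix_eq_transpose_mul_mul [Fintype α] (f : ι → α) (A : Matrix α α ℝ) :
    A.submatrix f f = (coordEmbedding f)ᵀ * A * coordEmbedding f := by
  ext i j
  simp [coordEmbedding, mul_apply, one_apply]

variable [Fintype ι]

/-- The `α × α` matrix with the entries of `M` at the positions `(f i, f j)`, and zero elsewhere
(for injective `f`), as a linear function of `M`. -/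
def pad (f : ι → α) : Matrix ι ι ℝ →ₗ[ℝ] Matrix α α ℝ where
  toFun M := coordEmbedding f * M * (coordEmbedding f)ᵀ
  map_add' M M' := by rw [Matrix.mul_add, Matrix.add_mul]
  map_smul' c M := by rw [Matrix.mul_smul, Matrix.smul_mul, RingHom.id_apply]

lemma pad_apply (f : ι → α) (M : Matrix ι ι ℝ) :
    pad f M = coordEmbedding f * M * (coordEmbedding f)ᵀ := rfl

lemma pad_submatrix {f : ι → α} (hf : f.Injective) (M : Matrix ι ι ℝ) :
    (pad f M).submatrix f f = M := by
  ext i j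
  simp [pad_apply, coordEmbedding, mul_apply, one_apply, hf.eq_iff]

variable [Fintype α]

lemma specNorm_coordEmbedding_le {f : ι → α} (hf : f.Injective) :
    specNorm (coordEmbedding f) ≤ 1 := by
  have hone : ‖(1 : Matrix ι ι ℝ)‖ ≤ 1 := by
    rw [← diagonal_one, l2_opNorm_diagonal]
    exact (pi_norm_const_le (1 : ℝ)).trans_eq norm_one
  have h := l2_opNorm_conjTranspose_mul_self (coordEmbedding f)
  rw [conjTranspose_eq_transpose_of_trivial, transpose_coordEmbedding_mul_self hf] at h
  rw [specNorm_eq_norm]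
  nlinarith [norm_nonneg (coordEmbedding f)]

lemma specNorm_transpose (A : Matrix α ι ℝ) : specNorm Aᵀ = specNorm A := by
  rw [specNorm_eq_norm, specNorm_eq_norm, ← conjTranspose_eq_transpose_of_trivial,
    l2_opNorm_conjTranspose]

lemma specNorm_mul_mul_le_of_le_one {β ι' : Type*} [Fintype β] [Fintype ι'] {A : Matrix α ι ℝ}
    {C : Matrix ι' β ℝ} (hA : specNorm A ≤ 1) (hC : specNorm C ≤ 1) (B : Matrix ι ι' ℝ) :
    specNorm (A * B * C) ≤ specNorm B := by
  simp only [specNorm_eq_norm] at *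
  calc ‖A * B * C‖ ≤ ‖A‖ * ‖B‖ * ‖C‖ :=
        (l2_opNorm_mul _ _).trans (by gcongr; exact l2_opNorm_mul _ _)
    _ ≤ 1 * ‖B‖ * 1 := by gcongr
    _ = ‖B‖ := by ring

lemma specNorm_pad_le {f : ι → α} (hf : f.Injective) (M : Matrix ι ι ℝ) :
    specNorm (pad f M) ≤ specNorm M :=
  have hE := specNorm_coordEmbedding_le hf
  specNorm_mul_mul_le_of_le_one hE ((specNorm_transpose _).trans_le hE) M

lemma specNorm_submatrix_le {f : ι → α} (hf : f.Injective) (A : Matrix α α ℝ) :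
    specNorm (A.submatrix f f) ≤ specNorm A := by
  have hE := specNorm_coordEmbedding_le hf
  rw [submatrix_eq_transpose_mul_mul]
  exact specNorm_mul_mul_le_of_le_one ((specNorm_transpose _).trans_le hE) hE A

lemma rank_pad_le (f : ι → α) (M : Matrix ι ι ℝ) : (pad f M).rank ≤ M.rank :=
  (rank_mul_le_left _ _).trans (rank_mul_le_right _ _)

lemma card_pad_ne_zero_le (f : ι → α) (M : Matrix ι ι ℝ) :
    (Finset.univ.filter fun q : α × α => pad f M q.1 q.2 ≠ 0).card ≤ Fintype.card ι ^ 2 := by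
  have hsub : (Finset.univ.filter fun q : α × α => pad f M q.1 q.2 ≠ 0)
      ⊆ Finset.univ.image (Prod.map f f) := by
    intro q hq
    have hE : ∀ a i, coordEmbedding f a i = if a = f i then 1 else 0 := fun a i => by
      simp [coordEmbedding, Matrix.one_apply]
    simp only [Finset.mem_filter, pad_apply, mul_apply, transpose_apply, Finset.sum_mul] at hq
    obtain ⟨i, _, hi⟩ := Finset.exists_ne_zero_of_sum_ne_zero hq.2
    obtain ⟨j, _, hj⟩ := Finset.exists_ne_zero_of_sum_ne_zero hi
    simp only [hE, ne_eq, mul_eq_zero, ite_eq_right_iff, one_ne_zero, imp_false, not_or,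
      not_not] at hj
    exact Finset.mem_image.2 ⟨(j, i), Finset.mem_univ _, Prod.ext hj.1.1.symm hj.2.symm⟩
  refine (Finset.card_le_card hsub).trans (Finset.card_image_le.trans_eq ?_)
  rw [Finset.card_univ, Fintype.card_prod, sq]

end Pad

/-! ### Adaptive queries -/

namespace QueryMaps

variable {N k t : ℕ}

/-- The query matrix used in round `j` on input `a`. -/
def query (Q : QueryMaps N k t) (a : Fin N → ℝ) (j : Fin t) : Matrix (Fin k) (Fin N) ℝ :=
  Q j fun i => Q.resp a ⟨i, i.isLt.trans j.isLt⟩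

lemma resp_eq_query_mulVec (Q : QueryMaps N k t) (a : Fin N → ℝ) (j : Fin t) :
    Q.resp a j = Q.query a j *ᵥ a := by
  rw [resp]
  rfl

lemma query_congr {Q : QueryMaps N k t} {a a' : Fin N → ℝ} {j : Fin t}
    (h : ∀ i < j, Q.resp a' i = Q.resp a i) : Q.query a' j = Q.query a j :=
  congrArg (Q j) <| funext fun i => h _ i.isLt

lemma resp_congr {Q : QueryMaps N k t} {a a' : Fin N → ℝ} (j : Fin t)
    (h : ∀ i ≤ j, Q.query a i *ᵥ a' = Q.query a i *ᵥ a) : Q.resp a' j = Q.resp a j := by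
  induction j using WellFoundedLT.induction with
  | ind j ih =>
    have hquery : Q.query a' j = Q.query a j :=
      query_congr fun i hi => ih i hi fun l hl => h l (hl.trans hi.le)
    rw [resp_eq_query_mulVec, resp_eq_query_mulVec, hquery, h j le_rfl]

section Measurability

variable {X : Type*} [MeasurableSpace X] {Q : X → QueryMaps N k t} {a : X → Fin N → ℝ}
  (hQ : ∀ (j : Fin t) i l, Measurable fun p : X × (Fin (j : ℕ) → Fin k → ℝ) => Q p.1 j p.2 i l)
  (ha : Measurable a)

include hQ ha

lemma measurable_resp (j : Fin t) : Measurable fun x => (Q x).resp (a x) j := by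
  induction j using WellFoundedLT.induction with
  | ind j ih =>
    have hhist : Measurable fun x => (x, fun i : Fin (j : ℕ) =>
        (Q x).resp (a x) ⟨i, i.isLt.trans j.isLt⟩) :=
      measurable_id.prodMk <| measurable_pi_lambda _ fun i => ih _ i.isLt
    simp only [resp_eq_query_mulVec]
    refine measurable_pi_lambda _ fun l => ?_
    simp only [mulVec, dotProduct]
    refine Finset.measurable_fun_sum _ fun i _ => ?_
    exact ((hQ j l i).comp hhist).mul ((measurable_pi_apply i).comp ha)

lemma measurable_query (j : Fin t) (l : Fin k) : Measurable fun x => (Q x).query (a x) j l := by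
  refine measurable_pi_lambda _ fun i => (hQ j l i).comp (measurable_id.prodMk ?_)
  exact measurable_pi_lambda _ fun i => measurable_resp hQ ha _

end Measurability

variable {E : Type*} [NormedAddCommGroup E] [InnerProductSpace ℝ E] [FiniteDimensional ℝ E]

/-- The directions revealed in round `j` when `Q` runs on the input `J b`: the pull-backs of the
queries for `j < t`, followed by the space `O` computed from all the responses. -/
def revealedSpace (Q : QueryMaps N k t) (J : E →L[ℝ] EuclideanSpace ℝ (Fin N))
    (O : (Fin t → Fin k → ℝ) → Submodule ℝ E) (j : ℕ) (b : E) : Submodule ℝ E :=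
  if hj : j < t then
    Submodule.span ℝ (Set.range fun l => J.adjoint (WithLp.toLp 2 (Q.query (J b) ⟨j, hj⟩ l)))
  else O (Q.resp (J b))

lemma finrank_revealedSpace_le (Q : QueryMaps N k t) (J : E →L[ℝ] EuclideanSpace ℝ (Fin N))
    {O : (Fin t → Fin k → ℝ) → Submodule ℝ E} (hO : ∀ h, Module.finrank ℝ (O h) ≤ k)
    (j : ℕ) (b : E) : Module.finrank ℝ (Q.revealedSpace J O j b) ≤ k := by
  by_cases hj : j < t
  · rw [revealedSpace, dif_pos hj]
    have h := finrank_range_le_card (R := ℝ) fun l =>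
      J.adjoint (WithLp.toLp 2 (Q.query (J b) ⟨j, hj⟩ l))
    rwa [Fintype.card_fin] at h
  · rw [revealedSpace, dif_neg hj]
    exact hO _

lemma query_mulVec_eq_of_inner_eq {Q : QueryMaps N k t} {J : E →L[ℝ] EuclideanSpace ℝ (Fin N)}
    {O : (Fin t → Fin k → ℝ) → Submodule ℝ E} {b b' : E} (j : Fin t)
    (h : ∀ q ∈ Q.revealedSpace J O j b, inner ℝ q b' = inner ℝ q b) :
    Q.query (J b) j *ᵥ J b' = Q.query (J b) j *ᵥ J b := by
  ext l
  have hmem : J.adjoint (WithLp.toLp 2 (Q.query (J b) j l)) ∈ Q.revealedSpace J O j b := by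
    rw [revealedSpace, dif_pos j.isLt]
    exact Submodule.subset_span ⟨l, rfl⟩
  have hl := h _ hmem
  rw [ContinuousLinearMap.adjoint_inner_left, ContinuousLinearMap.adjoint_inner_left] at hl
  simpa [PiLp.inner_apply, mulVec, dotProduct, mul_comm] using hl

lemma revealedSpace_congr {Q : QueryMaps N k t} {J : E →L[ℝ] EuclideanSpace ℝ (Fin N)}
    {O : (Fin t → Fin k → ℝ) → Submodule ℝ E} {b b' : E} (j : ℕ)
    (h : ∀ i < j, ∀ q ∈ Q.revealedSpace J O i b, inner ℝ q b' = inner ℝ q b) :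
    Q.revealedSpace J O j b' = Q.revealedSpace J O j b := by
  have hresp : ∀ i : Fin t, (i : ℕ) < j → Q.resp (J b') i = Q.resp (J b) i := fun i hi =>
    resp_congr i fun l hl => query_mulVec_eq_of_inner_eq l (h l (lt_of_le_of_lt hl hi))
  rw [revealedSpace, revealedSpace]
  split_ifs with hj
  · rw [query_congr fun i hi => hresp i hi]
  · rw [funext fun i => hresp i (i.isLt.trans_le (not_lt.1 hj))]

variable [MeasurableSpace E] [BorelSpace E]

lemma measurableSubspace_revealedSpace {Ω : Type*} [MeasurableSpace Ω] {Q : Ω → QueryMaps N k t}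
    (J : E →L[ℝ] EuclideanSpace ℝ (Fin N)) {O : Ω → (Fin t → Fin k → ℝ) → Submodule ℝ E}
    (hQ : ∀ (j : Fin t) i l, Measurable fun p : Ω × (Fin (j : ℕ) → Fin k → ℝ) => Q p.1 j p.2 i l)
    (hO : MeasurableSubspace fun p : Ω × (Fin t → Fin k → ℝ) => O p.1 p.2) (j : ℕ) :
    MeasurableSubspace fun p : Ω × E => (Q p.1).revealedSpace J (O p.1) j p.2 := by
  have hQ' (j : Fin t) i l : Measurable
      fun p : (Ω × E) × (Fin (j : ℕ) → Fin k → ℝ) => Q p.1.1 j p.2 i l :=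
    (hQ j i l).comp (measurable_fst.fst.prodMk measurable_snd)
  have hJ : Measurable fun p : Ω × E => (J p.2).ofLp :=
    (PiLp.continuous_ofLp 2 _).measurable.comp (J.continuous.measurable.comp measurable_snd)
  by_cases hj : j < t
  · simp only [revealedSpace, dif_pos hj]
    exact MeasurableSubspace.span_range fun l => J.adjoint.continuous.measurable.comp <|
      (PiLp.continuous_toLp 2 _).measurable.comp (measurable_query hQ' hJ _ l)
  · simp only [revealedSpace, dif_neg hj]
    exact hO.comp_measurable (g := fun p : Ω × E => (p.1, (Q p.1).resp (J p.2))) <|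
      measurable_fst.prodMk <| measurable_pi_lambda _ fun i => measurable_resp hQ' hJ i

end QueryMaps

section PlantedSpike

variable {ι Ω : Type*} [Fintype ι] [Nonempty ι] [MeasurableSpace Ω] {k : ℕ}

theorem exists_spike_measure_prod_round_le (μ : Measure Ω) [IsProbabilityMeasure μ]
    (hk : Fintype.card ι ≤ k)
    {W : ℕ → Ω → EuclideanSpace ℝ (ι × ι) → Submodule ℝ (EuclideanSpace ℝ (ι × ι))}
    (hW : ∀ j, MeasurableSubspace fun p : Ω × EuclideanSpace ℝ (ι × ι) => W j p.1 p.2)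
    (adapted : ∀ ω j b b', (∀ i < j, ∀ q ∈ W i ω b, inner ℝ q b' = inner ℝ q b) →
      W j ω b' = W j ω b)
    (hWk : ∀ j ω b, Module.finrank ℝ (W j ω b) ≤ k) (t : ℕ) :
    ∃ e : (ι → ℤˣ) × (ι → ℤˣ), (μ.prod γ[EuclideanSpace ℝ (ι × ι)])
      {p | threshold (k / Fintype.card ι) (t + 1) <
        ‖(W t p.1 (p.2 + spike e)).starProjection (spike e)‖ ^ 2} ≤ ENNReal.ofReal (1 / 8) := by
  have hsup : MeasurableSubspace fun p : Ω × EuclideanSpace ℝ (ι × ι) =>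
      (Finset.range (t + 1)).sup fun i => W i p.1 p.2 := MeasurableSubspace.finset_sup hW _
  obtain ⟨e, he⟩ := exists_spike_measure_prod_le μ
    (fun ω => adaptiveFlag_sup_range (fun j => (hW j).comp_measurable measurable_prodMk_left)
      (adapted ω)) hk (fun ω j b => finrank_sup_range_le (fun i => hWk i ω b) j) (t + 1) hsup
  refine ⟨e, (measure_mono fun p hp => ?_).trans he⟩
  have hle : W t p.1 (p.2 + spike e) ≤
      (Finset.range (t + 1)).sup fun i => W i p.1 (p.2 + spike e) :=
    Finset.le_sup (f := fun i => W i p.1 (p.2 + spike e)) (Finset.self_mem_range_succ t)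
  exact lt_of_lt_of_le hp
    (pow_le_pow_left₀ (norm_nonneg _) (norm_starProjection_le_of_le hle _) 2)

-- The space `O` counts as a last round: it has at most `k` dimensions, like any round.
theorem exists_spike_measure_prod_output_le (μ : Measure Ω) [IsProbabilityMeasure μ] {N t : ℕ}
    (J : EuclideanSpace ℝ (ι × ι) →L[ℝ] EuclideanSpace ℝ (Fin N)) (hk : Fintype.card ι ≤ k)
    {Q : Ω → QueryMaps N k t}
    (hQ : ∀ (j : Fin t) i l, Measurable fun p : Ω × (Fin (j : ℕ) → Fin k → ℝ) => Q p.1 j p.2 i l)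
    {O : Ω → (Fin t → Fin k → ℝ) → Submodule ℝ (EuclideanSpace ℝ (ι × ι))}
    (hO : MeasurableSubspace fun p : Ω × (Fin t → Fin k → ℝ) => O p.1 p.2)
    (hOk : ∀ ω h, Module.finrank ℝ (O ω h) ≤ k) :
    ∃ e : (ι → ℤˣ) × (ι → ℤˣ), (μ.prod γ[EuclideanSpace ℝ (ι × ι)])
      {p | threshold (k / Fintype.card ι) (t + 1) <
        ‖(O p.1 ((Q p.1).resp (J (p.2 + spike e)))).starProjection (spike e)‖ ^ 2}
      ≤ ENNReal.ofReal (1 / 8) := by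
  obtain ⟨e, he⟩ := exists_spike_measure_prod_round_le μ hk
    (W := fun j ω b => (Q ω).revealedSpace J (O ω) j b)
    (QueryMaps.measurableSubspace_revealedSpace J hQ hO)
    (fun _ j _ _ => QueryMaps.revealedSpace_congr j)
    (fun j ω b => QueryMaps.finrank_revealedSpace_le _ J (hOk ω) j b) t
  simp only [QueryMaps.revealedSpace, dif_neg (lt_irrefl t)] at he
  exact ⟨e, he⟩

end PlantedSpike

/-! ### Sparse matrices with a planted spike -/

section Reduction

variable {ι α : Type*}

/-- The space the spike must be close to when `B` approximates the padded input: it is read off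
the block of `B` along `f`, and is trivial unless its dimension is at most `k`. -/
def outputSpace (f : ι → α) (k : ℕ) (B : Matrix α α ℝ) :
    Submodule ℝ (EuclideanSpace ℝ (ι × ι)) :=
  if Module.finrank ℝ (columnSpaceMatrices (B.submatrix f f)) ≤ k then
    columnSpaceMatrices (B.submatrix f f)
  else ⊥

lemma finrank_outputSpace_le (f : ι → α) (k : ℕ) (B : Matrix α α ℝ) :
    Module.finrank ℝ (outputSpace f k B) ≤ k := by
  by_cases h : Module.finrank ℝ (columnSpaceMatrices (B.submatrix f f)) ≤ k
  · rwa [outputSpace, if_pos h]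
  · rw [outputSpace, if_neg h, finrank_bot]
    exact k.zero_le

variable [Fintype ι]

lemma outputSpace_eq [Fintype α] (f : ι → α) {k : ℕ} {B : Matrix α α ℝ}
    (hB : B.rank * Fintype.card ι ≤ k) :
    outputSpace f k B = columnSpaceMatrices (B.submatrix f f) :=
  if_pos <| (finrank_columnSpaceMatrices_le _).trans <|
    (Nat.mul_le_mul_right _ (rank_submatrix_le B f f)).trans hB

lemma measurableSubspace_outputSpace {X : Type*} [MeasurableSpace X] (f : ι → α) (k : ℕ)
    {B : X → Matrix α α ℝ} (hB : ∀ i j, Measurable fun x => B x i j) :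
    MeasurableSubspace fun x => outputSpace f k (B x) := by
  have hS : MeasurableSubspace fun x => columnSpaceMatrices ((B x).submatrix f f) :=
    measurableSubspace_columnSpaceMatrices fun i j => hB (f i) (f j)
  simpa only [outputSpace] using hS.ite_finrank_le k

variable [Fintype α]

lemma specNorm_sub_submatrix_le {f : ι → α} (hf : f.Injective) {M P : Matrix ι ι ℝ}
    {B : Matrix α α ℝ} {r : ℕ} {c : ℝ} (hc : 0 ≤ c) (hP : P.rank ≤ r)
    (hB : specNorm (pad f (M + P) - B) ≤ c * singVal (pad f (M + P)) (r + 1)) :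
    specNorm (P - B.submatrix f f) ≤ (c + 1) * specNorm M := by
  have hsing : singVal (pad f (M + P)) (r + 1) ≤ specNorm M := by
    refine (singVal_succ_le _ (pad f P) ((rank_pad_le f P).trans hP)).trans ?_
    rw [← map_sub, add_sub_cancel_right]
    exact specNorm_pad_le hf M
  have hblock : specNorm (M + P - B.submatrix f f) ≤ c * specNorm M := by
    have h := specNorm_submatrix_le hf (pad f (M + P) - B)
    have hsub : (pad f (M + P) - B).submatrix f f = M + P - B.submatrix f f :=
      congrArg (· - B.submatrix f f) (pad_submatrix hf (M + P))
    rw [hsub] at h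
    exact h.trans (hB.trans (by gcongr))
  calc specNorm (P - B.submatrix f f)
      = specNorm (M + P - B.submatrix f f - M) := by congr 1; abel
    _ ≤ specNorm (M + P - B.submatrix f f) + specNorm M := specNorm_sub_le _ _
    _ ≤ (c + 1) * specNorm M := by linarith

lemma le_norm_sq_starProjection_spike {f : ι → α} (hf : f.Injective)
    {b : EuclideanSpace ℝ (ι × ι)} (hb : specNorm (matrixOf b) ≤ 16 * √(Fintype.card ι))
    (e : (ι → ℤˣ) × (ι → ℤˣ)) {B : Matrix α α ℝ} {r : ℕ} (hr : 1 ≤ r)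
    (hB : specNorm (pad f (matrixOf (b + spike e)) - B)
      ≤ 2 * singVal (pad f (matrixOf (b + spike e))) (r + 1)) :
    1792 * (Fintype.card ι : ℝ)
      ≤ ‖(columnSpaceMatrices (B.submatrix f f)).starProjection (spike e)‖ ^ 2 := by
  have hspike : spike e
      = outer ((64 / √(Fintype.card ι)) • signVec e.1) (signVec e.2) := by
    rw [map_smul, LinearMap.smul_apply, spike]
  have hrank : (matrixOf (spike e)).rank ≤ r := by
    rw [hspike, matrixOf_outer]
    exact (rank_vecMulVec_le _ _).trans hr
  rw [map_add] at hB
  have hle : specNorm (matrixOf (spike e) - B.submatrix f f) ≤ 48 * √(Fintype.card ι) := by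
    have h := specNorm_sub_submatrix_le hf zero_le_two hrank hB
    linarith
  have hsq := pow_le_pow_left₀ (specNorm_nonneg _) hle 2
  have hcapture := norm_sq_outer_sub_sq_specNorm_le
    ((64 / √(Fintype.card ι)) • signVec e.1) (signVec e.2) (B.submatrix f f)
  rw [← hspike, norm_sq_spike] at hcapture
  rw [mul_pow, Real.sq_sqrt (Nat.cast_nonneg _)] at hsq
  linarith

lemma measure_specNorm_matrixOf_gt_le (hι : 2 ≤ Fintype.card ι) :
    γ[EuclideanSpace ℝ (ι × ι)] {b | 16 * √(Fintype.card ι) < specNorm (matrixOf b)}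
      ≤ ENNReal.ofReal (1 / 4) := by
  have h := measure_two_mul_lt_specNorm_le (ι := ι) (κ := ι) (R := 8 * √(Fintype.card ι))
    (by positivity)
  rw [← mul_assoc, show (2 : ℝ) * 8 = 16 by norm_num, mul_pow,
    Real.sq_sqrt (Nat.cast_nonneg _)] at h
  refine h.trans (ENNReal.ofReal_le_ofReal ?_)
  have hι' : (2 : ℝ) ≤ Fintype.card ι := by exact_mod_cast hι
  have h4 : (4 : ℝ) ≤ Real.exp (1 + 1) := by
    rw [Real.exp_add]
    nlinarith [Real.add_one_le_exp (1 : ℝ)]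
  calc Real.exp (Fintype.card ι / 2 + 5 / 2 * Fintype.card ι
        - 8 ^ 2 * Fintype.card ι / 16)
      ≤ Real.exp (-(1 + 1)) := Real.exp_le_exp.2 (by linarith)
    _ ≤ 1 / 4 := by
        rw [Real.exp_neg, one_div]
        exact inv_anti₀ (by norm_num) h4

end Reduction

/-! ### Low-rank approximation algorithms -/

section Algorithm

variable {Ω ι : Type*} [Fintype ι] {n k t r m : ℕ}

/-- The vectorised `n × n` matrix with a given `ι × ι` block along `f` and zero elsewhere. -/
def vecPad (f : ι → Fin n) : EuclideanSpace ℝ (ι × ι) →L[ℝ] EuclideanSpace ℝ (Fin (n * n)) :=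
  LinearMap.toContinuousLinearMap
    { toFun b := WithLp.toLp 2 (_root_.vec n (pad f (matrixOf b)))
      map_add' b b' := by ext; simp [_root_.vec]
      map_smul' c b := by ext; simp [_root_.vec] }

lemma ofLp_vecPad (f : ι → Fin n) (b : EuclideanSpace ℝ (ι × ι)) :
    (vecPad f b).ofLp = _root_.vec n (pad f (matrixOf b)) := rfl

/-- The seeds for which the algorithm with query maps `Q` and output `out` returns a matrix `B`
of rank at most `r` with `‖A - B‖ ≤ 2 σ_{r+1}(A)`. -/
def successSet (Q : Ω → QueryMaps (n * n) k t)
    (out : Ω → (Fin t → Fin k → ℝ) → Matrix (Fin n) (Fin n) ℝ) (r : ℕ)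
    (A : Matrix (Fin n) (Fin n) ℝ) : Set Ω :=
  {ω | (out ω ((Q ω).resp (_root_.vec n A))).rank ≤ r ∧
    specNorm (A - out ω ((Q ω).resp (_root_.vec n A))) ≤ 2 * singVal A (r + 1)}

variable {Q : Ω → QueryMaps (n * n) k t}
  {out : Ω → (Fin t → Fin k → ℝ) → Matrix (Fin n) (Fin n) ℝ}

lemma le_norm_sq_starProjection_outputSpace {f : ι → Fin n} (hf : f.Injective) (hr : 1 ≤ r)
    (hk : Fintype.card ι * r ≤ k) {b : EuclideanSpace ℝ (ι × ι)}
    (hb : specNorm (matrixOf b) ≤ 16 * √(Fintype.card ι)) (e : (ι → ℤˣ) × (ι → ℤˣ)) {ω : Ω}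
    (hω : ω ∈ successSet Q out r (pad f (matrixOf (b + spike e)))) :
    1792 * (Fintype.card ι : ℝ)
      ≤ ‖(outputSpace f k (out ω ((Q ω).resp (vecPad f (b + spike e))))).starProjection
          (spike e)‖ ^ 2 := by
  have hrank := (Nat.mul_le_mul_right (Fintype.card ι) hω.1).trans ((mul_comm _ _).trans_le hk)
  rw [ofLp_vecPad, outputSpace_eq f hrank]
  exact le_norm_sq_starProjection_spike hf hb e hr hω.2

variable [MeasurableSpace Ω] {μ : Measure Ω} [IsProbabilityMeasure μ]

-- On a Gaussian input with a planted spike, an output as good as required reveals the spike unless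
-- the Gaussian part has large norm.
theorem le_threshold_of_half_le_measure_successSet (hι : 2 ≤ Fintype.card ι) (hr : 1 ≤ r)
    (hk : Fintype.card ι * r ≤ k) {f : ι → Fin n} (hf : f.Injective)
    (hQ : ∀ (j : Fin t) i l, Measurable fun p : Ω × (Fin (j : ℕ) → Fin k → ℝ) => Q p.1 j p.2 i l)
    (hout : ∀ i j, Measurable fun p : Ω × (Fin t → Fin k → ℝ) => out p.1 p.2 i j)
    (hsucc : ∀ M, ENNReal.ofReal (1 / 2) ≤ μ (successSet Q out r (pad f M))) :
    1792 * (Fintype.card ι : ℝ) ≤ threshold (k / Fintype.card ι) (t + 1) := by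
  by_contra! hlt
  have : Nonempty ι := Fintype.card_pos_iff.1 (zero_lt_two.trans_le hι)
  obtain ⟨e, he⟩ := exists_spike_measure_prod_output_le μ (vecPad f)
    ((Nat.le_mul_of_pos_right _ hr).trans hk) hQ (O := fun ω h => outputSpace f k (out ω h))
    (measurableSubspace_outputSpace f k hout) fun ω h => finrank_outputSpace_le f k _
  set D := toMeasurable (μ.prod γ[EuclideanSpace ℝ (ι × ι)])
    {p | threshold (k / Fintype.card ι) (t + 1) < ‖(outputSpace f k
      (out p.1 ((Q p.1).resp (vecPad f (p.2 + spike e))))).starProjection (spike e)‖ ^ 2}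
  set L := {b : EuclideanSpace ℝ (ι × ι) | 16 * √(Fintype.card ι) < specNorm (matrixOf b)}
  have hpointwise : ∀ b, ENNReal.ofReal (1 / 2)
      ≤ μ ((fun ω => (ω, b)) ⁻¹' D) + (toMeasurable γ[_] L).indicator 1 b := fun b => by
    by_cases hb : b ∈ toMeasurable γ[_] L
    · rw [Set.indicator_of_mem hb, Pi.one_apply]
      exact le_add_left (ENNReal.ofReal_le_one.2 (by norm_num))
    · have hb' : specNorm (matrixOf b) ≤ 16 * √(Fintype.card ι) :=
        not_lt.1 fun h => hb (subset_toMeasurable _ _ h)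
      refine ((hsucc (matrixOf (b + spike e))).trans (measure_mono fun ω hω => ?_)).trans
        le_self_add
      exact subset_toMeasurable _ _
        (hlt.trans_le (le_norm_sq_starProjection_outputSpace hf hr hk hb' e hω))
  have hintegrated := lintegral_mono (μ := γ[EuclideanSpace ℝ (ι × ι)]) hpointwise
  rw [lintegral_const, measure_univ, mul_one, lintegral_add_right _
      (measurable_one.indicator (measurableSet_toMeasurable _ _)),
    lintegral_indicator_one (measurableSet_toMeasurable _ _),
    ← Measure.prod_apply_symm (measurableSet_toMeasurable _ _), measure_toMeasurable,
    measure_toMeasurable] at hintegrated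
  have htotal := hintegrated.trans (add_le_add he (measure_specNorm_matrixOf_gt_le hι))
  rw [← ENNReal.ofReal_add (by norm_num) (by norm_num),
    ENNReal.ofReal_le_ofReal_iff (by norm_num)] at htotal
  norm_num at htotal

-- Without any measurement the output is independent of the input, so it cannot be exact with
-- probability above `1 / 2` both for `A` and for `A'`.
lemma rounds_ne_zero {A A' : Matrix (Fin n) (Fin n) ℝ} (hne : A ≠ A') (hA : A.rank ≤ r)
    (hA' : A'.rank ≤ r)
    (hout : ∀ i j, Measurable fun p : Ω × (Fin t → Fin k → ℝ) => out p.1 p.2 i j)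
    (hsucc : ENNReal.ofReal (1 / 2) < μ (successSet Q out r A))
    (hsucc' : ENNReal.ofReal (1 / 2) < μ (successSet Q out r A')) : t ≠ 0 := by
  rintro rfl
  have hexact : ∀ {P : Matrix (Fin n) (Fin n) ℝ}, P.rank ≤ r →
      successSet Q out r P ⊆ {ω | out ω default = P} := fun hP ω hω => by
    have h := eq_of_specNorm_sub_le_singVal zero_le_two hP hω.2
    rw [Subsingleton.elim ((Q ω).resp _) default] at h
    exact h.symm
  have hmeas : MeasurableSet {ω | out ω default = A'} := by
    simp only [← Matrix.ext_iff, Set.ofPred_forall]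
    refine MeasurableSet.iInter fun i => MeasurableSet.iInter fun j => ?_
    exact ((hout i j).comp measurable_prodMk_right) (measurableSet_singleton _)
  obtain ⟨ω, hω, hω'⟩ := nonempty_inter_of_measure_lt_add μ hmeas (Set.subset_univ _)
    (Set.subset_univ _) <| calc
      μ Set.univ = ENNReal.ofReal (1 / 2) + ENNReal.ofReal (1 / 2) := by
        rw [measure_univ, ← ENNReal.ofReal_add (by norm_num) (by norm_num)]
        norm_num
      _ < μ {ω | out ω default = A} + μ {ω | out ω default = A'} :=
        ENNReal.add_lt_add (hsucc.trans_le (measure_mono (hexact hA)))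
          (hsucc'.trans_le (measure_mono (hexact hA')))
  exact hne (hω.symm.trans hω')

lemma rounds_ne_zero_of_forall_pad [Nonempty ι] {f : ι → Fin n} (hf : f.Injective) (hr : 1 ≤ r)
    (hout : ∀ i j, Measurable fun p : Ω × (Fin t → Fin k → ℝ) => out p.1 p.2 i j)
    (hsucc : ∀ M, ENNReal.ofReal (1 / 2) < μ (successSet Q out r (pad f M))) : t ≠ 0 := by
  let i := Classical.arbitrary ι
  have hrank : (pad f (single i i 1)).rank ≤ r := by
    refine (rank_pad_le _ _).trans (le_trans ?_ hr)
    rw [single_eq_single_vecMulVec_single]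
    exact rank_vecMulVec_le _ _
  have hne : pad f 0 ≠ pad f (single i i (1 : ℝ)) := fun h => by
    have hblock := congrArg (fun P => P.submatrix f f) h
    simp only [pad_submatrix hf] at hblock
    simpa using congrFun₂ hblock i i
  exact rounds_ne_zero hne (by simp) hrank hout (hsucc 0) (hsucc _)

end Algorithm

section RoundLowerBound

lemma log_div_le_of_le_threshold {m k s t : ℕ} (hs : 0 < s) (hk : 0 < k) (hm : 0 < m)
    (hms : m ≤ 4 * s ^ 2) (ht : t ≠ 0)
    (h : 1792 * (s : ℝ) ≤ threshold (k / s) (t + 1)) : Real.log (m / k) ≤ 34 * t := by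
  have hms' : (m : ℝ) ≤ 4 * s ^ 2 := by exact_mod_cast hms
  have ht' : (1 : ℝ) ≤ t := by exact_mod_cast Nat.one_le_iff_ne_zero.2 ht
  have hratio : (m : ℝ) / k ≤ 2 ^ (17 * (t + 1)) := by
    rw [threshold, mul_div_assoc', div_mul_eq_mul_div, le_div_iff₀ (by positivity)] at h
    rw [div_le_iff₀ (by positivity)]
    nlinarith [show (0 : ℝ) ≤ 2 ^ (17 * (t + 1)) * k by positivity]
  calc Real.log (m / k) ≤ Real.log (2 ^ (17 * (t + 1))) :=
        Real.log_le_log (by positivity) hratio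
    _ = (17 * (t + 1)) * Real.log 2 := by rw [Real.log_pow]; push_cast; ring
    _ ≤ (17 * (t + 1)) * 1 := by
        gcongr
        exact Real.log_two_lt_d9.le.trans (by norm_num)
    _ ≤ 34 * t := by linarith

theorem sparse_spectral_LRA_round_lower_bound_general {m n r k t : ℕ} (hm : 4 ≤ m)
    (hmn : m ≤ n ^ 2) (hr : 1 ≤ r) (hk : √m * r ≤ k) {Ω : Type*} [MeasurableSpace Ω]
    (μ : Measure Ω) [IsProbabilityMeasure μ] {Q : Ω → QueryMaps (n * n) k t}
    {out : Ω → (Fin t → Fin k → ℝ) → Matrix (Fin n) (Fin n) ℝ}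
    (hQ : ∀ (j : Fin t) i l, Measurable fun p : Ω × (Fin (j : ℕ) → Fin k → ℝ) => Q p.1 j p.2 i l)
    (hout : ∀ i j, Measurable fun p : Ω × (Fin t → Fin k → ℝ) => out p.1 p.2 i j)
    (hsucc : ∀ A : Matrix (Fin n) (Fin n) ℝ,
      (Finset.univ.filter fun q : Fin n × Fin n => A q.1 q.2 ≠ 0).card ≤ m →
      ENNReal.ofReal (1 / 2) < μ (successSet Q out r A)) :
    Real.log (m / k) ≤ 34 * t := by
  have hs : 2 ≤ m.sqrt := Nat.le_sqrt.2 hm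
  have hsn : m.sqrt ≤ n := (Nat.sqrt_le_sqrt hmn).trans_eq (Nat.sqrt_eq' n)
  have hsk : m.sqrt * r ≤ k := by
    have h := (mul_le_mul_of_nonneg_right Real.nat_sqrt_le_real_sqrt r.cast_nonneg).trans hk
    exact_mod_cast h
  have hms : m ≤ 4 * m.sqrt ^ 2 := by nlinarith [Nat.lt_succ_sqrt' m]
  have hpad (M : Matrix (Fin m.sqrt) (Fin m.sqrt) ℝ) :
      ENNReal.ofReal (1 / 2) < μ (successSet Q out r (pad (Fin.castLE hsn) M)) :=
    hsucc _ <| (card_pad_ne_zero_le _ M).trans <| by simpa using Nat.sqrt_le' m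
  have hthreshold := le_threshold_of_half_le_measure_successSet (ι := Fin m.sqrt)
    (by simpa using hs) hr (by simpa using hsk) (Fin.castLE_injective hsn) hQ hout
    fun M => (hpad M).le
  have : Nonempty (Fin m.sqrt) := ⟨⟨0, by lia⟩⟩
  have ht : t ≠ 0 := rounds_ne_zero_of_forall_pad (Fin.castLE_injective hsn) hr hout hpad
  rw [Fintype.card_fin] at hthreshold
  exact log_div_le_of_le_threshold (by omega) (by nlinarith) (by omega) hms ht hthreshold

end RoundLowerBound

/-- Round lower bound for high-probability 2-approximate spectral norm low-rank
approximation of sparse matrices. -/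
theorem sparse_spectral_LRA_round_lower_bound :
    ∃ (c C : ℝ) (m₀ : ℕ), 0 < c ∧ 0 < C ∧
      ∀ (m n r k t : ℕ), m₀ ≤ m → m ≤ n ^ 2 → 1 ≤ r →
        Real.sqrt m * r ≤ (k : ℝ) → k ≤ m →
      ∀ (Ω : Type) [MeasurableSpace Ω] (μ : Measure Ω) [IsProbabilityMeasure μ]
        (Qf : Ω → QueryMaps (n * n) k t)
        (out : Ω → (Fin t → Fin k → ℝ) → Matrix (Fin n) (Fin n) ℝ),
        (∀ ω, (Qf ω).Valid) →
        (∀ (j : Fin t) (i : Fin k) (l : Fin (n * n)),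
            Measurable fun p : Ω × (Fin (j : ℕ) → Fin k → ℝ) => Qf p.1 j p.2 i l) →
        (∀ i j : Fin n,
            Measurable fun p : Ω × (Fin t → Fin k → ℝ) => out p.1 p.2 i j) →
        (∀ A : Matrix (Fin n) (Fin n) ℝ,
            (Finset.univ.filter fun q : Fin n × Fin n => A q.1 q.2 ≠ 0).card ≤ m →
            1 - ENNReal.ofReal ((m : ℝ) ^ (-C)) ≤
              μ {ω | (out ω (QueryMaps.resp (Qf ω) (vec n A))).rank ≤ r ∧
                    specNorm (A - out ω (QueryMaps.resp (Qf ω) (vec n A)))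
                      ≤ 2 * singVal A (r + 1)}) →
        c * Real.log ((m : ℝ) / k) ≤ (t : ℝ) := by
  refine ⟨1 / 34, 1, 4, by norm_num, one_pos,
    fun m n r k t hm hmn hr hk _ Ω _ μ _ Qf out _ hQ hout hsucc => ?_⟩
  have hm' : (m : ℝ)⁻¹ ≤ 4⁻¹ := inv_anti₀ (by norm_num) (by exact_mod_cast hm)
  have hhalf : ENNReal.ofReal (1 / 2) < 1 - ENNReal.ofReal ((m : ℝ) ^ (-1 : ℝ)) := by
    rw [Real.rpow_neg_one, ← ENNReal.ofReal_one, ← ENNReal.ofReal_sub _ (by positivity),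
      ENNReal.ofReal_lt_ofReal_iff] <;> linarith
  have hlog := sparse_spectral_LRA_round_lower_bound_general hm hmn hr hk μ hQ hout
    fun A hA => hhalf.trans_le (hsucc A hA)
  linarith

end
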